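/- If q_{XY} has full support on 𝒳×𝒴 and δ1, δ2 are Hamming distortion measures, then there exist d1* > 0 and d2* > 0 such that for all distortion pairs with 0 ≤ d1 ≤ d1* and 0 ≤ d2 ≤ d2*, R_CR(d1,d2) = R(d1,d2) = max{ R_{X|Y}(d1), R_{Y|X}(d2) }. -/

import Mathlib

open scoped BigOperators Classical

noncomputable section

namespace TWR

/-- Base-2 Shannon entropy of a finitely supported distribution (with the
convention `0 * log 0 = 0`, automatic since `Real.logb 2 0 = 0`). -/
def H2 {α : Type} [Fintype α] (p : α → ℝ) : ℝ :=
  -∑ a, p a * Real.logb 2 (p a)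

/-- `p` is a probability mass function. -/
def IsPmf {α : Type} [Fintype α] (p : α → ℝ) : Prop :=
  (∀ a, 0 ≤ p a) ∧ ∑ a, p a = 1

/-- `W` is a conditional pmf. -/
def IsCondPmf {α β : Type} [Fintype β] (W : α → β → ℝ) : Prop :=
  ∀ a, IsPmf (W a)

/-- Mutual information `I(A;B)` (base 2) of a joint pmf on `α × β`. -/
def MI {α β : Type} [Fintype α] [Fintype β] (p : α × β → ℝ) : ℝ :=
  H2 (fun a => ∑ b, p (a, b)) + H2 (fun b => ∑ a, p (a, b)) - H2 p

/-- Conditional entropy `H(A|B)` of a joint pmf on `α × β`. -/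
def condH {α β : Type} [Fintype α] [Fintype β] (p : α × β → ℝ) : ℝ :=
  H2 p - H2 (fun b => ∑ a, p (a, b))

/-- Conditional mutual information `I(A;C|B)` of a joint pmf on `α × β × γ`,
conditioning on the middle coordinate (`I(A;C|B) = H(A,B)+H(B,C)-H(A,B,C)-H(B)`). -/
def condMI {α β γ : Type} [Fintype α] [Fintype β] [Fintype γ] (p : α × β × γ → ℝ) : ℝ :=
  H2 (fun ab : α × β => ∑ c, p (ab.1, ab.2, c)) +
    H2 (fun bc : β × γ => ∑ a, p (a, bc.1, bc.2)) -
    H2 p - H2 (fun b : β => ∑ a, ∑ c, p (a, b, c))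

/-- Markov chain `A − B − C` for a joint pmf on `α × β × γ`. -/
def Markov {α β γ : Type} [Fintype α] [Fintype β] [Fintype γ] (p : α × β × γ → ℝ) : Prop :=
  ∀ a b c, p (a, b, c) * (∑ a', ∑ c', p (a', b, c')) =
    (∑ c', p (a, b, c')) * (∑ a', p (a', b, c))

variable {𝒳 𝒴 Xh Yh 𝒲 𝒰 𝒱 : Type}
variable [Fintype 𝒳] [Fintype 𝒴] [Fintype Xh] [Fintype Yh]
variable [Fintype 𝒲] [Fintype 𝒰] [Fintype 𝒱]

/-- The i.i.d. block source. -/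
def iid (q : 𝒳 × 𝒴 → ℝ) (n : ℕ) : (Fin n → 𝒳) × (Fin n → 𝒴) → ℝ :=
  fun xy => ∏ i, q (xy.1 i, xy.2 i)

/-- Average distortion at receiver 1 of the RD code `(f, g1, ·)`. -/
def Delta1 (q : 𝒳 × 𝒴 → ℝ) (δ1 : 𝒳 → Xh → ℝ) {n m : ℕ}
    (f : (Fin n → 𝒳) × (Fin n → 𝒴) → Fin m)
    (g1 : Fin m × (Fin n → 𝒴) → Fin n → Xh) : ℝ :=
  ∑ xy : (Fin n → 𝒳) × (Fin n → 𝒴),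
    iid q n xy * ((n : ℝ)⁻¹ * ∑ i, δ1 (xy.1 i) (g1 (f xy, xy.2) i))

/-- Average distortion at receiver 2 of the RD code `(f, ·, g2)`. -/
def Delta2 (q : 𝒳 × 𝒴 → ℝ) (δ2 : 𝒴 → Yh → ℝ) {n m : ℕ}
    (f : (Fin n → 𝒳) × (Fin n → 𝒴) → Fin m)
    (g2 : Fin m × (Fin n → 𝒳) → Fin n → Yh) : ℝ :=
  ∑ xy : (Fin n → 𝒳) × (Fin n → 𝒴),
    iid q n xy * ((n : ℝ)⁻¹ * ∑ i, δ2 (xy.2 i) (g2 (f xy, xy.1) i))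

/-- `r` is a `(d1,d2)`-achievable rate (source coding). -/
def RDAchievable (q : 𝒳 × 𝒴 → ℝ) (δ1 : 𝒳 → Xh → ℝ) (δ2 : 𝒴 → Yh → ℝ)
    (d1 d2 r : ℝ) : Prop :=
  ∀ ε > (0 : ℝ), ∃ (n m : ℕ) (f : (Fin n → 𝒳) × (Fin n → 𝒴) → Fin m)
    (g1 : Fin m × (Fin n → 𝒴) → Fin n → Xh)
    (g2 : Fin m × (Fin n → 𝒳) → Fin n → Yh),
    0 < n ∧ Real.logb 2 m / n ≤ r + ε ∧
    Delta1 q δ1 f g1 ≤ d1 + ε ∧ Delta2 q δ2 f g2 ≤ d2 + ε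

/-- The rate-distortion function `R(d1,d2)`. -/
def RD (q : 𝒳 × 𝒴 → ℝ) (δ1 : 𝒳 → Xh → ℝ) (δ2 : 𝒴 → Yh → ℝ) (d1 d2 : ℝ) : ℝ :=
  sInf {r : ℝ | 0 ≤ r ∧ RDAchievable q δ1 δ2 d1 d2 r}

/-- `r` is `(d1,d2)`-achievable with common reconstructions. -/
def CRAchievable (q : 𝒳 × 𝒴 → ℝ) (δ1 : 𝒳 → Xh → ℝ) (δ2 : 𝒴 → Yh → ℝ)
    (d1 d2 r : ℝ) : Prop :=
  ∀ ε > (0 : ℝ), ∃ (n m : ℕ) (f : (Fin n → 𝒳) × (Fin n → 𝒴) → Fin m)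
    (g1 : Fin m × (Fin n → 𝒴) → Fin n → Xh)
    (g2 : Fin m × (Fin n → 𝒳) → Fin n → Yh)
    (φ1 : Fin m × (Fin n → 𝒴) → Fin n → Yh)
    (φ2 : Fin m × (Fin n → 𝒳) → Fin n → Xh),
    0 < n ∧ Real.logb 2 m / n ≤ r + ε ∧
    Delta1 q δ1 f g1 ≤ d1 + ε ∧ Delta2 q δ2 f g2 ≤ d2 + ε ∧
    (∑ xy : (Fin n → 𝒳) × (Fin n → 𝒴),
      if φ2 (f xy, xy.1) = g1 (f xy, xy.2) then 0 else iid q n xy) ≤ ε ∧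
    (∑ xy : (Fin n → 𝒳) × (Fin n → 𝒴),
      if φ1 (f xy, xy.2) = g2 (f xy, xy.1) then 0 else iid q n xy) ≤ ε

/-- The common-reconstruction rate-distortion function `R_CR(d1,d2)`. -/
def CRRD (q : 𝒳 × 𝒴 → ℝ) (δ1 : 𝒳 → Xh → ℝ) (δ2 : 𝒴 → Yh → ℝ) (d1 d2 : ℝ) : ℝ :=
  sInf {r : ℝ | 0 ≤ r ∧ CRAchievable q δ1 δ2 d1 d2 r}

/-- The conditional rate-distortion function `R_{X|Y}(d1)`. -/
def condRD (q : 𝒳 × 𝒴 → ℝ) (δ1 : 𝒳 → Xh → ℝ) (d1 : ℝ) : ℝ :=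
  sInf {r : ℝ | ∃ W : 𝒳 × 𝒴 → Xh → ℝ, IsCondPmf W ∧
    (∑ x, ∑ y, ∑ xh, q (x, y) * W (x, y) xh * δ1 x xh) ≤ d1 ∧
    r = condMI (fun t : 𝒳 × 𝒴 × Xh => q (t.1, t.2.1) * W (t.1, t.2.1) t.2.2)}

/-- Swap the two components of a joint source. -/
def swap (q : 𝒳 × 𝒴 → ℝ) : 𝒴 × 𝒳 → ℝ := fun t => q (t.2, t.1)

/-- The marginal rate-distortion function `R_X(d)`. -/
def margRD (qX : 𝒳 → ℝ) (δ1 : 𝒳 → Xh → ℝ) (d1 : ℝ) : ℝ :=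
  sInf {r : ℝ | ∃ W : 𝒳 → Xh → ℝ, IsCondPmf W ∧
    (∑ x, ∑ xh, qX x * W x xh * δ1 x xh) ≤ d1 ∧
    r = MI (fun t : 𝒳 × Xh => qX t.1 * W t.1 t.2)}

def margX (q : 𝒳 × 𝒴 → ℝ) : 𝒳 → ℝ := fun x => ∑ y, q (x, y)
def margY (q : 𝒳 × 𝒴 → ℝ) : 𝒴 → ℝ := fun y => ∑ x, q (x, y)

/-- The joint rate-distortion function `R_{XY}(d1,d2)`. -/
def jointRD (q : 𝒳 × 𝒴 → ℝ) (δ1 : 𝒳 → Xh → ℝ) (δ2 : 𝒴 → Yh → ℝ) (d1 d2 : ℝ) : ℝ :=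
  sInf {r : ℝ | ∃ W : 𝒳 × 𝒴 → Xh × Yh → ℝ, IsCondPmf W ∧
    (∑ xy : 𝒳 × 𝒴, ∑ z : Xh × Yh, q xy * W xy z * δ1 xy.1 z.1) ≤ d1 ∧
    (∑ xy : 𝒳 × 𝒴, ∑ z : Xh × Yh, q xy * W xy z * δ2 xy.2 z.2) ≤ d2 ∧
    r = MI (fun t : (𝒳 × 𝒴) × (Xh × Yh) => q t.1 * W t.1 t.2)}

/-- The Wyner–Ziv rate-distortion function `R^{WZ}_{X|Y}(d1)`
(with auxiliary alphabet of cardinality `|𝒳| + 1`). -/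
def wzRD (q : 𝒳 × 𝒴 → ℝ) (δ1 : 𝒳 → Xh → ℝ) (d1 : ℝ) : ℝ :=
  sInf {r : ℝ | ∃ p : Fin (Fintype.card 𝒳 + 1) × 𝒳 × 𝒴 → ℝ, IsPmf p ∧
    (∀ x y, (∑ a, p (a, x, y)) = q (x, y)) ∧ Markov p ∧
    (∃ π1 : Fin (Fintype.card 𝒳 + 1) × 𝒴 → Xh,
      (∑ a, ∑ x, ∑ y, p (a, x, y) * δ1 x (π1 (a, y))) ≤ d1) ∧
    r = condMI (fun t : 𝒳 × 𝒴 × Fin (Fintype.card 𝒳 + 1) => p (t.2.2, t.1, t.2.1))}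

/-- The set over which the single-letter CR formula
`max{I(X;X̂,Ŷ|Y), I(Y;X̂,Ŷ|X)}` is minimised. -/
def crFormulaSet (q : 𝒳 × 𝒴 → ℝ) (δ1 : 𝒳 → Xh → ℝ) (δ2 : 𝒴 → Yh → ℝ)
    (d1 d2 : ℝ) : Set ℝ :=
  {r : ℝ | ∃ W : 𝒳 × 𝒴 → Xh × Yh → ℝ, IsCondPmf W ∧
    (∑ x, ∑ y, ∑ z : Xh × Yh, q (x, y) * W (x, y) z * δ1 x z.1) ≤ d1 ∧
    (∑ x, ∑ y, ∑ z : Xh × Yh, q (x, y) * W (x, y) z * δ2 y z.2) ≤ d2 ∧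
    r = max
      (condMI (fun t : 𝒳 × 𝒴 × (Xh × Yh) => q (t.1, t.2.1) * W (t.1, t.2.1) t.2.2))
      (condMI (fun t : 𝒴 × 𝒳 × (Xh × Yh) => q (t.2.1, t.1) * W (t.2.1, t.1) t.2.2))}

/-- Joint law of source blocks and channel outputs for a JSC encoder. -/
def jscP (q : 𝒳 × 𝒴 → ℝ) (qUV : 𝒲 → 𝒰 × 𝒱 → ℝ) {n m : ℕ}
    (f : (Fin n → 𝒳) × (Fin n → 𝒴) → Fin m → 𝒲)
    (x : Fin n → 𝒳) (y : Fin n → 𝒴) (u : Fin m → 𝒰) (v : Fin m → 𝒱) : ℝ :=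
  (∏ i, q (x i, y i)) * ∏ j, qUV (f (x, y) j) (u j, v j)

/-- `(d1,d2)` is achievable by joint source-channel coding with source rate `κs`
and channel rate `κc` (bandwidth expansion `κc/κs`). -/
def JSCAchievable (q : 𝒳 × 𝒴 → ℝ) (qUV : 𝒲 → 𝒰 × 𝒱 → ℝ)
    (δ1 : 𝒳 → Xh → ℝ) (δ2 : 𝒴 → Yh → ℝ) (κs κc d1 d2 : ℝ) : Prop :=
  ∀ ε > (0 : ℝ), ∃ (t n m : ℕ) (f : (Fin n → 𝒳) × (Fin n → 𝒴) → Fin m → 𝒲)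
    (g1 : (Fin m → 𝒰) × (Fin n → 𝒴) → Fin n → Xh)
    (g2 : (Fin m → 𝒱) × (Fin n → 𝒳) → Fin n → Yh),
    0 < t ∧ (n : ℝ) = κs * t ∧ (m : ℝ) = κc * t ∧
    (∑ x : Fin n → 𝒳, ∑ y : Fin n → 𝒴, ∑ u : Fin m → 𝒰, ∑ v : Fin m → 𝒱,
      jscP q qUV f x y u v * ((n : ℝ)⁻¹ * ∑ i, δ1 (x i) (g1 (u, y) i))) ≤ d1 + ε ∧
    (∑ x : Fin n → 𝒳, ∑ y : Fin n → 𝒴, ∑ u : Fin m → 𝒰, ∑ v : Fin m → 𝒱,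
      jscP q qUV f x y u v * ((n : ℝ)⁻¹ * ∑ i, δ2 (y i) (g2 (v, x) i))) ≤ d2 + ε

/-- `(d1,d2)` is achievable by joint source-channel coding with common
reconstructions, source rate `κs` and channel rate `κc`. -/
def CRJSCAchievable (q : 𝒳 × 𝒴 → ℝ) (qUV : 𝒲 → 𝒰 × 𝒱 → ℝ)
    (δ1 : 𝒳 → Xh → ℝ) (δ2 : 𝒴 → Yh → ℝ) (κs κc d1 d2 : ℝ) : Prop :=
  ∀ ε > (0 : ℝ), ∃ (t n m : ℕ) (f : (Fin n → 𝒳) × (Fin n → 𝒴) → Fin m → 𝒲)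
    (g1 : (Fin m → 𝒰) × (Fin n → 𝒴) → Fin n → Xh)
    (g2 : (Fin m → 𝒱) × (Fin n → 𝒳) → Fin n → Yh)
    (φ1 : (Fin m → 𝒰) × (Fin n → 𝒴) → Fin n → Yh)
    (φ2 : (Fin m → 𝒱) × (Fin n → 𝒳) → Fin n → Xh),
    0 < t ∧ (n : ℝ) = κs * t ∧ (m : ℝ) = κc * t ∧
    (∑ x : Fin n → 𝒳, ∑ y : Fin n → 𝒴, ∑ u : Fin m → 𝒰, ∑ v : Fin m → 𝒱,
      jscP q qUV f x y u v * ((n : ℝ)⁻¹ * ∑ i, δ1 (x i) (g1 (u, y) i))) ≤ d1 + ε ∧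
    (∑ x : Fin n → 𝒳, ∑ y : Fin n → 𝒴, ∑ u : Fin m → 𝒰, ∑ v : Fin m → 𝒱,
      jscP q qUV f x y u v * ((n : ℝ)⁻¹ * ∑ i, δ2 (y i) (g2 (v, x) i))) ≤ d2 + ε ∧
    (∑ x : Fin n → 𝒳, ∑ y : Fin n → 𝒴, ∑ u : Fin m → 𝒰, ∑ v : Fin m → 𝒱,
      if φ2 (v, x) = g1 (u, y) then 0 else jscP q qUV f x y u v) ≤ ε ∧
    (∑ x : Fin n → 𝒳, ∑ y : Fin n → 𝒴, ∑ u : Fin m → 𝒰, ∑ v : Fin m → 𝒱,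
      if φ1 (u, y) = g2 (v, x) then 0 else jscP q qUV f x y u v) ≤ ε

/-- `I(W;U)` under the joint law `pW · qUV` (U-marginal of the broadcast channel). -/
def chMIU (qUV : 𝒲 → 𝒰 × 𝒱 → ℝ) (pW : 𝒲 → ℝ) : ℝ :=
  MI (fun t : 𝒲 × 𝒰 => pW t.1 * ∑ v, qUV t.1 (t.2, v))

/-- `I(W;V)` under the joint law `pW · qUV` (V-marginal of the broadcast channel). -/
def chMIV (qUV : 𝒲 → 𝒰 × 𝒱 → ℝ) (pW : 𝒲 → ℝ) : ℝ :=
  MI (fun t : 𝒲 × 𝒱 => pW t.1 * ∑ u, qUV t.1 (u, t.2))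

/-- The doubly symmetric binary source with crossover probability `ρ`. -/
def dsbs (ρ : ℝ) : Bool × Bool → ℝ :=
  fun t => if t.1 = t.2 then (1 - ρ) / 2 else ρ / 2

/-- The Hamming distortion measure. -/
def dHam {α : Type} : α → α → ℝ := fun a b => if a = b then 0 else 1

/-- The binary entropy function (base 2). -/
def binEnt (x : ℝ) : ℝ := -(x * Real.logb 2 x) - (1 - x) * Real.logb 2 (1 - x)

/-- A difference distortion measure built from a per-letter function of the
(modular) difference. -/
def diffD {l : ℕ} (δ : Fin l → ℝ) : Fin l → Fin l → ℝ := fun a b => δ (a - b)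

/-- Capacity of the modulo-additive channel with noise `pN` and input
distortion constraint `d`. -/
def Cadd {l : ℕ} (δ : Fin l → ℝ) (d : ℝ) (pN : Fin l → ℝ) : ℝ :=
  sSup {r : ℝ | ∃ pW : Fin l → ℝ, IsPmf pW ∧ (∑ w, pW w * δ w) ≤ d ∧
    r = MI (fun t : Fin l × Fin l => pW t.1 * pN (t.2 - t.1))}

/-- The minimax (worst-noise) capacity under distortion constraint `d`. -/
def Cworst {l : ℕ} (δ : Fin l → ℝ) (d : ℝ) : ℝ :=
  sInf {r : ℝ | ∃ pN : Fin l → ℝ, IsPmf pN ∧ (∑ x, pN x * δ x) ≤ d ∧ r = Cadd δ d pN}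

/-- Wyner's common information `K(X;Y)` (auxiliary alphabet of size 4). -/
def wynerK (q : 𝒳 × 𝒴 → ℝ) : ℝ :=
  sInf {r : ℝ | ∃ W : 𝒳 × 𝒴 → Fin 4 → ℝ, IsCondPmf W ∧
    Markov (fun t : 𝒳 × Fin 4 × 𝒴 => q (t.1, t.2.2) * W (t.1, t.2.2) t.2.1) ∧
    r = MI (fun t : (𝒳 × 𝒴) × Fin 4 => q t.1 * W t.1 t.2)}

/-- The one-description (Kimura–Uyematsu) upper bound `R_U*(d1,d2)`. -/
def oneDescUB (q : 𝒳 × 𝒴 → ℝ) (δ1 : 𝒳 → Xh → ℝ) (δ2 : 𝒴 → Yh → ℝ) (d1 d2 : ℝ) : ℝ :=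
  sInf {r : ℝ | ∃ W : 𝒳 × 𝒴 → Fin (Fintype.card 𝒳 * Fintype.card 𝒴 + 2) → ℝ,
    IsCondPmf W ∧
    (∃ π1 : Fin (Fintype.card 𝒳 * Fintype.card 𝒴 + 2) × 𝒴 → Xh,
      (∑ x, ∑ y, ∑ c, q (x, y) * W (x, y) c * δ1 x (π1 (c, y))) ≤ d1) ∧
    (∃ π2 : Fin (Fintype.card 𝒳 * Fintype.card 𝒴 + 2) × 𝒳 → Yh,
      (∑ x, ∑ y, ∑ c, q (x, y) * W (x, y) c * δ2 y (π2 (c, x))) ≤ d2) ∧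
    r = max
      (condMI (fun t : 𝒳 × 𝒴 × Fin (Fintype.card 𝒳 * Fintype.card 𝒴 + 2) =>
        q (t.1, t.2.1) * W (t.1, t.2.1) t.2.2))
      (condMI (fun t : 𝒴 × 𝒳 × Fin (Fintype.card 𝒳 * Fintype.card 𝒴 + 2) =>
        q (t.2.1, t.1) * W (t.2.1, t.1) t.2.2))}

end TWR

namespace TWR

/-- Gibbs' inequality in base 2. -/
lemma gibbs {α : Type} [Fintype α] (p r : α → ℝ) (hp : ∀ a, 0 ≤ p a) (hp1 : ∑ a, p a = 1)
    (hr : ∀ a, 0 ≤ r a) (hr1 : ∑ a, r a ≤ 1) (hs : ∀ a, 0 < p a → 0 < r a) :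
    ∑ a, p a * Real.logb 2 (r a) ≤ ∑ a, p a * Real.logb 2 (p a) := by
  have hl : 0 < Real.log 2 := Real.log_pos (by norm_num)
  have key : ∀ a, p a * Real.logb 2 (r a) - p a * Real.logb 2 (p a) ≤ (r a - p a) / Real.log 2 := by
    intro a
    rcases (hp a).eq_or_lt with h | h
    · rw [← h]; simp; have := hr a; positivity
    · have h2 := hs a h
      have h3 : Real.log (r a / p a) ≤ r a / p a - 1 := Real.log_le_sub_one_of_pos (by positivity)
      rw [Real.log_div h2.ne' h.ne'] at h3
      rw [Real.logb, Real.logb, le_div_iff₀ hl]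
      have h4 : (p a * (Real.log (r a) / Real.log 2) - p a * (Real.log (p a) / Real.log 2)) * Real.log 2
          = p a * (Real.log (r a) - Real.log (p a)) := by field_simp
      rw [h4]
      calc p a * (Real.log (r a) - Real.log (p a)) ≤ p a * (r a / p a - 1) := by gcongr
        _ = r a - p a := by field_simp
  have := Finset.sum_le_sum (fun a (_ : a ∈ Finset.univ) => key a)
  rw [Finset.sum_sub_distrib, ← Finset.sum_div, Finset.sum_sub_distrib, hp1] at this
  have h5 : (∑ a, r a - 1) / Real.log 2 ≤ 0 := div_nonpos_of_nonpos_of_nonneg (by linarith) hl.le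
  linarith

/-- Total mass of a product of row-stochastic weights. -/
lemma sum_prod_one {α : Type} [Fintype α] {n : ℕ} (T : Fin n → α → ℝ)
    (hT : ∀ i, ∑ a, T i a = 1) : ∑ w : Fin n → α, ∏ i, T i (w i) = 1 := by
  have := Finset.prod_univ_sum (fun _ : Fin n => (Finset.univ : Finset α)) T
  rw [Fintype.piFinset_univ] at this
  rw [← this]; simp [hT]

/-- First moment of an i.i.d. sum. -/
lemma iid_first {α : Type} [Fintype α] (p φ : α → ℝ) (hp1 : ∑ a, p a = 1) (n : ℕ) :
    ∑ w : Fin n → α, (∏ i, p (w i)) * ∑ i, φ (w i) = n * ∑ a, p a * φ a := by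
  induction n with
  | zero => simp
  | succ n ih =>
    rw [← (Fin.consEquiv (fun _ : Fin (n+1) => α)).sum_comp, Fintype.sum_prod_type]
    simp only [Fin.consEquiv_apply, Fin.prod_univ_succ, Fin.sum_univ_succ, Fin.cons_zero, Fin.cons_succ]
    have h1 := sum_prod_one (n := n) (fun _ => p) (fun _ => hp1)
    have : ∀ a : α, ∑ v : Fin n → α, p a * (∏ i, p (v i)) * (φ a + ∑ i, φ (v i))
        = p a * φ a + p a * (n * ∑ a, p a * φ a) := by
      intro a
      rw [← ih]
      calc _ = p a * φ a * ∑ v : Fin n → α, (∏ i, p (v i)) +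
            p a * ∑ v : Fin n → α, (∏ i, p (v i)) * ∑ i, φ (v i) := by
            rw [Finset.mul_sum, Finset.mul_sum, ← Finset.sum_add_distrib]
            exact Finset.sum_congr rfl fun v _ => by ring
        _ = _ := by rw [h1]; ring
    simp only [this]
    rw [Finset.sum_add_distrib, ← Finset.sum_mul, hp1]; push_cast; ring

/-- Second moment of a centred i.i.d. sum. -/
lemma iid_second {α : Type} [Fintype α] (p φ : α → ℝ) (hp1 : ∑ a, p a = 1)
    (hφ : ∑ a, p a * φ a = 0) (n : ℕ) :
    ∑ w : Fin n → α, (∏ i, p (w i)) * (∑ i, φ (w i)) ^ 2 = n * ∑ a, p a * φ a ^ 2 := by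
  induction n with
  | zero => simp
  | succ n ih =>
    rw [← (Fin.consEquiv (fun _ : Fin (n+1) => α)).sum_comp, Fintype.sum_prod_type]
    simp only [Fin.consEquiv_apply, Fin.prod_univ_succ, Fin.sum_univ_succ, Fin.cons_zero, Fin.cons_succ]
    have h1 := sum_prod_one (n := n) (fun _ => p) (fun _ => hp1)
    have h2 := iid_first p φ hp1 n
    have : ∀ a : α, ∑ v : Fin n → α, p a * (∏ i, p (v i)) * (φ a + ∑ i, φ (v i)) ^ 2
        = p a * φ a ^ 2 + p a * (n * ∑ a, p a * φ a ^ 2) := by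
      intro a
      rw [← ih]
      calc _ = p a * φ a ^ 2 * ∑ v : Fin n → α, (∏ i, p (v i)) +
            2 * p a * φ a * (∑ v : Fin n → α, (∏ i, p (v i)) * ∑ i, φ (v i)) +
            p a * ∑ v : Fin n → α, (∏ i, p (v i)) * (∑ i, φ (v i)) ^ 2 := by
            rw [Finset.mul_sum, Finset.mul_sum, Finset.mul_sum, ← Finset.sum_add_distrib,
              ← Finset.sum_add_distrib]
            exact Finset.sum_congr rfl fun v _ => by ring
        _ = _ := by rw [h1, h2, hφ]; ring
    simp only [this]
    rw [Finset.sum_add_distrib, ← Finset.sum_mul, hp1]; push_cast; ring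

/-- Weak law of large numbers (Chebyshev). -/
lemma iid_cheb {α : Type} [Fintype α] (p φ : α → ℝ) (hp : ∀ a, 0 ≤ p a) (hp1 : ∑ a, p a = 1)
    (δ : ℝ) (hδ : 0 < δ) (n : ℕ) (hn : 0 < n) :
    ∑ w : Fin n → α, (if |∑ i, φ (w i) - n * ∑ a, p a * φ a| ≤ n * δ then 0 else ∏ i, p (w i))
      ≤ (∑ a, p a * (φ a - ∑ a, p a * φ a) ^ 2) / (n * δ ^ 2) := by
  set μ := ∑ a, p a * φ a with hμ
  have hc : ∑ a, p a * (φ a - μ) = 0 := by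
    simp only [mul_sub]; rw [Finset.sum_sub_distrib, ← Finset.sum_mul, hp1, ← hμ]; ring
  have h2 := iid_second p (fun a => φ a - μ) hp1 hc n
  have hn' : (0:ℝ) < n := by exact_mod_cast hn
  rw [le_div_iff₀ (by positivity)]
  have : (∑ w : Fin n → α, (if |∑ i, φ (w i) - n * μ| ≤ n * δ then 0 else ∏ i, p (w i))) * (n * δ)^2
      ≤ ∑ w : Fin n → α, (∏ i, p (w i)) * (∑ i, (φ (w i) - μ)) ^ 2 := by
    rw [Finset.sum_mul]
    refine Finset.sum_le_sum fun w _ => ?_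
    have hP : 0 ≤ ∏ i, p (w i) := Finset.prod_nonneg fun i _ => hp _
    have e : ∑ i, (φ (w i) - μ) = ∑ i, φ (w i) - n * μ := by
      rw [Finset.sum_sub_distrib]; simp
    rw [e]
    split_ifs with h
    · rw [zero_mul]; positivity
    · push Not at h
      refine mul_le_mul_of_nonneg_left ?_ hP
      rw [← sq_abs (∑ i, φ (w i) - n * μ)]
      gcongr
  rw [h2] at this
  have h3 : (n:ℝ) * ((∑ w : Fin n → α, (if |∑ i, φ (w i) - n * μ| ≤ n * δ then 0 else ∏ i, p (w i))) * (n * δ^2))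
     ≤ n * ∑ a, p a * (φ a - μ) ^ 2 := by
    refine le_trans (le_of_eq ?_) this; ring
  exact le_of_mul_le_mul_left h3 hn'

end TWR

namespace TWR

/-- Symmetric (Hamming) test channel with off-diagonal weight `e`. -/
def Tch {α : Type} [Fintype α] (e : ℝ) (x xh : α) : ℝ :=
  if x = xh then 1 - ((Fintype.card α : ℝ) - 1) * e else e

/-- Expected log-likelihood of the test channel at distortion `D`. -/
def tval (α : Type) [Fintype α] (e D : ℝ) : ℝ :=
  (1 - D) * Real.logb 2 (1 - ((Fintype.card α : ℝ) - 1) * e) + D * Real.logb 2 e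

lemma Tch_comm {α : Type} [Fintype α] (e : ℝ) (x y : α) : Tch e x y = Tch e y x := by
  unfold Tch; simp only [eq_comm]

lemma Tch_form {α : Type} [Fintype α] (e : ℝ) (x y : α) :
    Tch e x y = e + (if x = y then 1 - (Fintype.card α : ℝ) * e else 0) := by
  unfold Tch; split_ifs <;> ring

lemma Tch_sum {α : Type} [Fintype α] (e : ℝ) (xh : α) : ∑ x, Tch e x xh = 1 := by
  simp only [Tch_form, Finset.sum_add_distrib]
  simp

lemma Tch_sum' {α : Type} [Fintype α] (e : ℝ) (x : α) : ∑ xh, Tch e x xh = 1 := by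
  simp only [Tch_comm e x]; exact Tch_sum e x

lemma Tch_nonneg {α : Type} [Fintype α] {e : ℝ} (h0 : 0 ≤ e)
    (h1 : ((Fintype.card α : ℝ) - 1) * e < 1) (x xh : α) : 0 ≤ Tch e x xh := by
  unfold Tch; split_ifs <;> linarith

lemma Tch_pos {α : Type} [Fintype α] {e : ℝ} (h0 : 0 < e)
    (h1 : ((Fintype.card α : ℝ) - 1) * e < 1) (x xh : α) : 0 < Tch e x xh := by
  unfold Tch; split_ifs <;> linarith

lemma log_Tch {α : Type} [Fintype α] (e : ℝ) (x xh : α) :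
    Real.logb 2 (Tch e x xh) = tval α e (dHam x xh) := by
  unfold Tch tval dHam; split_ifs <;> simp

lemma tval_eq {α : Type} [Fintype α] (e D : ℝ) : tval α e D =
    Real.logb 2 (1 - ((Fintype.card α : ℝ) - 1) * e) +
    D * (Real.logb 2 e - Real.logb 2 (1 - ((Fintype.card α : ℝ) - 1) * e)) := by
  unfold tval; ring

lemma sum_tval {α β : Type} [Fintype α] [Fintype β] (e : ℝ) (p d : β → ℝ) (hp : ∑ b, p b = 1) :
    ∑ b, p b * tval α e (d b) = tval α e (∑ b, p b * d b) := by
  simp only [tval_eq]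
  rw [Finset.sum_mul]
  simp only [mul_add, Finset.sum_add_distrib]
  rw [← Finset.sum_mul, hp, one_mul]
  congr 1
  exact Finset.sum_congr rfl fun b _ => by ring

lemma tval_anti {α : Type} [Fintype α] {e D D' : ℝ} (he : 0 < e)
    (h1 : (Fintype.card α : ℝ) * e ≤ 1) (hD : D ≤ D') : tval α e D' ≤ tval α e D := by
  have : Real.logb 2 e ≤ Real.logb 2 (1 - ((Fintype.card α : ℝ) - 1) * e) :=
    Real.logb_le_logb_of_le (by norm_num) he (by linarith)
  rw [tval_eq, tval_eq]; nlinarith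

variable {𝒳 𝒴 : Type} [Fintype 𝒳] [Fintype 𝒴]

/-- Sums over pairs of blocks as sums over blocks of pairs. -/
lemma sum_blocks {n : ℕ} (F : (Fin n → 𝒳) × (Fin n → 𝒴) → ℝ) :
    ∑ xy, F xy = ∑ w : Fin n → 𝒳 × 𝒴, F (fun i => (w i).1, fun i => (w i).2) := by
  rw [← (Equiv.arrowProdEquivProdArrow (Fin n) (fun _ => 𝒳) (fun _ => 𝒴)).sum_comp]
  rfl

lemma iid_nonneg (q : 𝒳 × 𝒴 → ℝ) (hq : IsPmf q) (n : ℕ) (xy) : 0 ≤ iid q n xy :=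
  Finset.prod_nonneg fun _ _ => hq.1 _

lemma iid_sum (q : 𝒳 × 𝒴 → ℝ) (hq : IsPmf q) (n : ℕ) : ∑ xy, iid q n xy = 1 := by
  rw [sum_blocks]
  exact sum_prod_one (fun _ : Fin n => q) (fun _ => hq.2)

lemma iid_mean (q : 𝒳 × 𝒴 → ℝ) (hq : IsPmf q) (n : ℕ) (φ : 𝒳 × 𝒴 → ℝ) :
    ∑ xy, iid q n xy * ∑ i, φ (xy.1 i, xy.2 i) = n * ∑ a, q a * φ a := by
  rw [sum_blocks]
  exact iid_first q φ hq.2 n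

lemma margY_pos (q : 𝒳 × 𝒴 → ℝ) (hsupp : ∀ x y, 0 < q (x, y)) [Nonempty 𝒳] (y : 𝒴) :
    0 < ∑ x, q (x, y) :=
  Finset.sum_pos (fun x _ => hsupp x y) Finset.univ_nonempty

lemma sum_margY_log (q : 𝒳 × 𝒴 → ℝ) :
    ∑ a : 𝒳 × 𝒴, q a * Real.logb 2 (∑ x, q (x, a.2)) = - H2 (fun y => ∑ x, q (x, y)) := by
  rw [Fintype.sum_prod_type_right, H2, neg_neg]
  exact Finset.sum_congr rfl fun y _ => by rw [Finset.sum_mul]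

/-- Converse for receiver 1. -/
lemma conv_block (q : 𝒳 × 𝒴 → ℝ) (hq : IsPmf q) (hsupp : ∀ x y, 0 < q (x, y)) [Nonempty 𝒳]
    {n m : ℕ} (hn : 0 < n)
    (f : (Fin n → 𝒳) × (Fin n → 𝒴) → Fin m) (g1 : Fin m × (Fin n → 𝒴) → Fin n → 𝒳)
    (hm : 0 < m)
    (e : ℝ) (he : 0 < e) (he1 : ((Fintype.card 𝒳 : ℝ) - 1) * e < 1) :
    condH q + tval 𝒳 e (Delta1 q dHam f g1) ≤ Real.logb 2 m / n := by
  have hn' : (0:ℝ) < n := by exact_mod_cast hn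
  have hm' : (0:ℝ) < m := by exact_mod_cast hm
  set qY : 𝒴 → ℝ := fun y => ∑ x, q (x, y) with hqY
  have hqYpos : ∀ y, 0 < qY y := margY_pos q hsupp
  have hT := fun x xh : 𝒳 => Tch_pos he he1 x xh
  set R : (Fin n → 𝒳) × (Fin n → 𝒴) → Fin m → ℝ := fun xy j =>
    (∏ i, qY (xy.2 i)) * (m:ℝ)⁻¹ * ∏ i, Tch e (xy.1 i) (g1 (j, xy.2) i) with hR
  have hRpos : ∀ xy j, 0 < R xy j := fun xy j =>
    mul_pos (mul_pos (Finset.prod_pos fun i _ => hqYpos _) (by positivity))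
      (Finset.prod_pos fun i _ => hT _ _)
  have hle : ∀ xy, R xy (f xy) ≤ ∑ j, R xy j := fun xy =>
    Finset.single_le_sum (f := R xy) (fun j _ => (hRpos xy j).le) (Finset.mem_univ _)
  have hsum : ∑ xy, ∑ j, R xy j = 1 := by
    rw [Fintype.sum_prod_type_right]
    have : ∀ y : Fin n → 𝒴, ∑ x : Fin n → 𝒳, ∑ j, R (x, y) j = ∏ i, qY (y i) := by
      intro y
      rw [Finset.sum_comm]
      have : ∀ j : Fin m, ∑ x : Fin n → 𝒳, R (x, y) j = (∏ i, qY (y i)) * (m:ℝ)⁻¹ := by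
        intro j
        simp only [hR]
        rw [← Finset.mul_sum, sum_prod_one (fun i x => Tch e x (g1 (j, y) i))
          (fun i => Tch_sum _ _), mul_one]
      simp only [this]
      simp; field_simp
    simp only [this]
    refine sum_prod_one (fun _ => qY) (fun _ => ?_)
    rw [hqY, ← Fintype.sum_prod_type_right (f := q)]; exact hq.2
  have hg := gibbs (iid q n) (fun xy => ∑ j, R xy j) (iid_nonneg q hq n) (iid_sum q hq n)
    (fun xy => Finset.sum_nonneg fun j _ => (hRpos xy j).le) hsum.le
    (fun xy _ => lt_of_lt_of_le (hRpos xy (f xy)) (hle xy))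
  have h1 : ∑ xy, iid q n xy * Real.logb 2 (iid q n xy) = - (n * H2 q) := by
    have : ∀ xy, Real.logb 2 (iid q n xy) = ∑ i, Real.logb 2 (q (xy.1 i, xy.2 i)) := by
      intro xy; unfold iid
      rw [Real.logb_prod]; intro i _; exact (hsupp _ _).ne'
    simp only [this]
    rw [iid_mean q hq n (fun a => Real.logb 2 (q a)), H2]; ring
  have h2 : ∀ xy, iid q n xy * Real.logb 2 (∑ j, R xy j) ≥
      iid q n xy * (∑ i, Real.logb 2 (qY (xy.2 i))) - iid q n xy * Real.logb 2 m +
      iid q n xy * ∑ i, tval 𝒳 e (dHam (xy.1 i) (g1 (f xy, xy.2) i)) := by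
    intro xy
    have hlog : Real.logb 2 (R xy (f xy)) = (∑ i, Real.logb 2 (qY (xy.2 i))) - Real.logb 2 m +
        ∑ i, tval 𝒳 e (dHam (xy.1 i) (g1 (f xy, xy.2) i)) := by
      simp only [hR]
      have a1 : ∏ i, qY (xy.2 i) ≠ 0 := (Finset.prod_pos fun i _ => hqYpos _).ne'
      have a2 : ∏ i, Tch e (xy.1 i) (g1 (f xy, xy.2) i) ≠ 0 := (Finset.prod_pos fun i _ => hT _ _).ne'
      rw [Real.logb_mul (mul_ne_zero a1 (by positivity)) a2, Real.logb_mul a1 (by positivity),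
        Real.logb_inv, Real.logb_prod _ _ (fun i _ => (hqYpos _).ne'),
        Real.logb_prod _ _ (fun i _ => (hT _ _).ne')]
      simp only [log_Tch]; ring
    have := Real.logb_le_logb_of_le (b := 2) (by norm_num) (hRpos xy (f xy)) (hle xy)
    rw [hlog] at this
    have := mul_le_mul_of_nonneg_left this (iid_nonneg q hq n xy)
    linarith
  have h3 := Finset.sum_le_sum (fun xy (_ : xy ∈ Finset.univ) => h2 xy)
  rw [Finset.sum_add_distrib, Finset.sum_sub_distrib, ← Finset.sum_mul, iid_sum q hq n,
    iid_mean q hq n (fun a => Real.logb 2 (qY a.2)), sum_margY_log] at h3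
  have h4 : ∑ xy, iid q n xy * ∑ i, tval 𝒳 e (dHam (xy.1 i) (g1 (f xy, xy.2) i)) =
      n * tval 𝒳 e (Delta1 q dHam f g1) := by
    rw [Delta1, ← sum_tval e (iid q n) _ (iid_sum q hq n), Finset.mul_sum]
    refine Finset.sum_congr rfl fun xy _ => ?_
    simp only [tval_eq, Finset.sum_add_distrib]
    rw [← Finset.sum_mul]
    simp only [Finset.sum_const, Finset.card_univ, Fintype.card_fin, nsmul_eq_mul]
    field_simp
  rw [h4] at h3
  rw [h1] at hg
  rw [le_div_iff₀ hn', condH]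
  nlinarith

/-- Joint-law identities for a conditional test channel. -/
lemma condMI_lower (q : 𝒳 × 𝒴 → ℝ) (hq : IsPmf q) 
    (W : 𝒳 × 𝒴 → 𝒳 → ℝ) (hW : IsCondPmf W)
    (e : ℝ) (he : 0 < e) (he1 : ((Fintype.card 𝒳 : ℝ) - 1) * e < 1) :
    condH q + tval 𝒳 e (∑ x, ∑ y, ∑ xh, q (x, y) * W (x, y) xh * dHam x xh) ≤
      condMI (fun t : 𝒳 × 𝒴 × 𝒳 => q (t.1, t.2.1) * W (t.1, t.2.1) t.2.2) := by
  set p : 𝒳 × 𝒴 × 𝒳 → ℝ := fun t => q (t.1, t.2.1) * W (t.1, t.2.1) t.2.2 with hp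
  have hp0 : ∀ t, 0 ≤ p t := fun t => mul_nonneg (hq.1 _) ((hW _).1 _)
  have hm1 : ∀ x y, ∑ c, p (x, y, c) = q (x, y) := fun x y => by
    simp only [hp]; rw [← Finset.mul_sum, (hW _).2, mul_one]
  have hp1 : ∑ t, p t = 1 := by
    simp only [Fintype.sum_prod_type, hm1]
    rw [← Fintype.sum_prod_type (f := q)]; exact hq.2
  set s : 𝒴 × 𝒳 → ℝ := fun bc => ∑ a, p (a, bc.1, bc.2) with hs
  have hs0 : ∀ t, 0 ≤ s t := fun t => Finset.sum_nonneg fun _ _ => hp0 _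
  have hsp : ∀ x y c, 0 < p (x, y, c) → 0 < s (y, c) := fun x y c h =>
    lt_of_lt_of_le h (Finset.single_le_sum (f := fun a => p (a, y, c)) (fun _ _ => hp0 _) (Finset.mem_univ x))
  have hT := fun x xh : 𝒳 => Tch_pos he he1 x xh
  have hperm : ∀ F : 𝒳 × 𝒴 × 𝒳 → ℝ, ∑ t, F t = ∑ bc : 𝒴 × 𝒳, ∑ a, F (a, bc.1, bc.2) := by
    intro F; rw [Fintype.sum_prod_type_right]
  have hg := gibbs p (fun t => s t.2 * Tch e t.1 t.2.2) hp0 hp1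
    (fun t => mul_nonneg (hs0 _) (hT _ _).le)
    (by
      rw [hperm]
      simp only [← Finset.mul_sum, Tch_sum, mul_one]
      rw [← hperm]; exact hp1.le)
    (fun t ht => mul_pos (hsp _ _ _ ht) (hT _ _))
  have h1 : ∑ t, p t * Real.logb 2 (s t.2 * Tch e t.1 t.2.2) =
      - H2 s + tval 𝒳 e (∑ t, p t * dHam t.1 t.2.2) := by
    rw [← sum_tval e p _ hp1, H2, neg_neg]
    have : ∑ bc, s bc * Real.logb 2 (s bc) = ∑ t, p t * Real.logb 2 (s t.2) := by
      rw [hperm]; exact Finset.sum_congr rfl fun bc _ => by rw [hs, Finset.sum_mul]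
    rw [this, ← Finset.sum_add_distrib]
    refine Finset.sum_congr rfl fun t _ => ?_
    rcases (hp0 t).eq_or_lt with h | h
    · rw [← h]; simp
    · rw [Real.logb_mul (hsp _ _ _ h).ne' (hT _ _).ne', log_Tch]; ring
  have h2 : ∑ t, p t * dHam t.1 t.2.2 = ∑ x, ∑ y, ∑ xh, q (x, y) * W (x, y) xh * dHam x xh := by
    simp only [Fintype.sum_prod_type, hp]
  have h3 : condMI p = H2 q + H2 s - H2 p - H2 (fun y => ∑ x, q (x, y)) := by
    unfold condMI; simp only [hm1]; rfl
  rw [h3, condH, ← h2]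
  rw [h1] at hg
  have : H2 p = -∑ t, p t * Real.logb 2 (p t) := rfl
  linarith

end TWR

namespace TWR

variable {𝒳 𝒴 : Type} [Fintype 𝒳] [Fintype 𝒴]

/-- Backward source: `q` pulled back through the symmetric test channel in the first coordinate. -/
def pull (e : ℝ) (q : 𝒳 × 𝒴 → ℝ) (t : 𝒳 × 𝒴) : ℝ :=
  (q t - e * ∑ x, q (x, t.2)) / (1 - (Fintype.card 𝒳 : ℝ) * e)

lemma pull_sum (e : ℝ) (q : 𝒳 × 𝒴 → ℝ) (h : (Fintype.card 𝒳 : ℝ) * e < 1) (y : 𝒴) :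
    ∑ x, pull e q (x, y) = ∑ x, q (x, y) := by
  unfold pull
  rw [← Finset.sum_div, Finset.sum_sub_distrib]
  have : 1 - (Fintype.card 𝒳 : ℝ) * e ≠ 0 := by linarith
  simp
  field_simp

lemma pull_T (e : ℝ) (q : 𝒳 × 𝒴 → ℝ) (h : (Fintype.card 𝒳 : ℝ) * e < 1) (x : 𝒳) (y : 𝒴) :
    ∑ xh, pull e q (xh, y) * Tch e x xh = q (x, y) := by
  simp only [Tch_form, mul_add, Finset.sum_add_distrib]
  rw [← Finset.sum_mul, pull_sum e q h]
  simp [pull]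
  have : 1 - (Fintype.card 𝒳 : ℝ) * e ≠ 0 := by linarith
  rw [div_mul_cancel₀ _ this]; ring

lemma marg_le_one (q : 𝒳 × 𝒴 → ℝ) (hq : IsPmf q) (y : 𝒴) : ∑ x, q (x, y) ≤ 1 := by
  rw [← hq.2, Fintype.sum_prod_type_right]
  exact Finset.single_le_sum (f := fun y => ∑ x, q (x, y))
    (fun y _ => Finset.sum_nonneg fun x _ => hq.1 _) (Finset.mem_univ y)

lemma pull_ge (e : ℝ) (he0 : 0 ≤ e) (q : 𝒳 × 𝒴 → ℝ) (hq : IsPmf q)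
    (h : (Fintype.card 𝒳 : ℝ) * e < 1) (t : 𝒳 × 𝒴) (ht : e ≤ q t) : q t - e ≤ pull e q t := by
  unfold pull
  have h1 := marg_le_one q hq t.2
  rw [le_div_iff₀ (by linarith)]
  have : 0 ≤ (Fintype.card 𝒳 : ℝ) * e := by positivity
  nlinarith

lemma Tch_dist (e : ℝ) (xh : 𝒳) : ∑ x, Tch e x xh * dHam x xh = ((Fintype.card 𝒳 : ℝ) - 1) * e := by
  have : ∀ x : 𝒳, Tch e x xh * dHam x xh = e - (if x = xh then e else 0) := by
    intro x; unfold Tch dHam; split_ifs <;> ring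
  simp only [this, Finset.sum_sub_distrib]
  simp; ring

lemma condMI_pull (q : 𝒳 × 𝒴 → ℝ) (hq : IsPmf q) (hsupp : ∀ x y, 0 < q (x, y))
    (e : ℝ) (he0 : 0 ≤ e) (he1 : (Fintype.card 𝒳 : ℝ) * e < 1) (heq : ∀ t, e < q t) :
    ∃ W : 𝒳 × 𝒴 → 𝒳 → ℝ, IsCondPmf W ∧
      (∑ x, ∑ y, ∑ xh, q (x, y) * W (x, y) xh * dHam x xh) = ((Fintype.card 𝒳 : ℝ) - 1) * e ∧
      condMI (fun t : 𝒳 × 𝒴 × 𝒳 => q (t.1, t.2.1) * W (t.1, t.2.1) t.2.2) =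
        condH q + tval 𝒳 e (((Fintype.card 𝒳 : ℝ) - 1) * e) ∧
      0 ≤ condH q + tval 𝒳 e (((Fintype.card 𝒳 : ℝ) - 1) * e) := by
  have hpull : ∀ t, 0 < pull e q t := fun t =>
    lt_of_lt_of_le (by linarith [heq t]) (pull_ge e he0 q hq he1 t (heq t).le)
  have hT : ∀ x xh : 𝒳, 0 ≤ Tch e x xh := Tch_nonneg he0 (by linarith)
  refine ⟨fun xy xh => pull e q (xh, xy.2) * Tch e xy.1 xh / q xy, ?_, ?_, ?_⟩
  · intro xy
    refine ⟨fun xh => div_nonneg (mul_nonneg (hpull _).le (hT _ _)) (hq.1 _), ?_⟩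
    rw [← Finset.sum_div, pull_T e q he1]
    exact div_self (hsupp _ _).ne'
  · have : ∀ x y xh, q (x, y) * (pull e q (xh, y) * Tch e x xh / q (x, y)) * dHam x xh =
        pull e q (xh, y) * (Tch e x xh * dHam x xh) := by
      intro x y xh; have := (hsupp x y).ne'; field_simp
    simp only [this]
    rw [Finset.sum_comm]
    have : ∀ y : 𝒴, ∑ x, ∑ xh, pull e q (xh, y) * (Tch e x xh * dHam x xh) =
      (∑ x, q (x, y)) * (((Fintype.card 𝒳 : ℝ) - 1) * e) := by
      intro y
      rw [Finset.sum_comm]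
      simp only [← Finset.mul_sum, Tch_dist]
      rw [← Finset.sum_mul, pull_sum e q he1]
    simp only [this]
    rw [← Finset.sum_mul, ← Fintype.sum_prod_type_right (f := q), hq.2, one_mul]
  set p : 𝒳 × 𝒴 × 𝒳 → ℝ := fun t => pull e q (t.2.2, t.2.1) * Tch e t.1 t.2.2 with hp
  have hpp : (fun t : 𝒳 × 𝒴 × 𝒳 => q (t.1, t.2.1) *
      (pull e q (t.2.2, t.2.1) * Tch e t.1 t.2.2 / q (t.1, t.2.1))) = p := by
    funext t; have := (hsupp t.1 t.2.1).ne'; simp only [hp]; field_simp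
  simp only [hpp]
  have hp0 : ∀ t, 0 ≤ p t := fun t => mul_nonneg (hpull _).le (hT _ _)
  have hm1 : ∀ x y, ∑ c, p (x, y, c) = q (x, y) := fun x y => pull_T e q he1 x y
  have hp1 : ∑ t, p t = 1 := by
    simp only [Fintype.sum_prod_type, hm1]
    rw [← Fintype.sum_prod_type (f := q)]; exact hq.2
  have hs : ∀ y c, ∑ a, p (a, y, c) = pull e q (c, y) := fun y c => by
    simp only [hp]; rw [← Finset.mul_sum, Tch_sum, mul_one]
  have hperm : ∀ F : 𝒳 × 𝒴 × 𝒳 → ℝ, ∑ t, F t = ∑ bc : 𝒴 × 𝒳, ∑ a, F (a, bc.1, bc.2) := by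
    intro F; rw [Fintype.sum_prod_type_right]
  have hd : ∑ t, p t * dHam t.1 t.2.2 = ((Fintype.card 𝒳 : ℝ) - 1) * e := by
    rw [hperm]
    simp only [hp, mul_assoc, ← Finset.mul_sum, Tch_dist]
    rw [← Finset.sum_mul, Fintype.sum_prod_type]
    simp only [pull_sum e q he1]
    rw [← Fintype.sum_prod_type_right (f := q), hq.2, one_mul]
  have hS : H2 (fun bc : 𝒴 × 𝒳 => ∑ a, p (a, bc.1, bc.2)) =
      - ∑ t, p t * Real.logb 2 (pull e q (t.2.2, t.2.1)) := by
    rw [hperm, H2]; simp only [← Finset.sum_mul, hs]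
  have hP : H2 p = - (∑ t, p t * Real.logb 2 (pull e q (t.2.2, t.2.1))) -
      tval 𝒳 e (((Fintype.card 𝒳 : ℝ) - 1) * e) := by
    rw [← hd, ← sum_tval e p _ hp1, H2, ← neg_add', ← Finset.sum_add_distrib]
    congr 1
    refine Finset.sum_congr rfl fun t _ => ?_
    rcases (hT t.1 t.2.2).eq_or_lt with h | h
    · have : p t = 0 := by simp only [hp, ← h, mul_zero]
      rw [this]; simp
    · have : Real.logb 2 (p t) = Real.logb 2 (pull e q (t.2.2, t.2.1)) + tval 𝒳 e (dHam t.1 t.2.2) := by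
        rw [← log_Tch]; exact Real.logb_mul (hpull _).ne' h.ne'
      rw [this]; ring
  have hMI : condMI p = H2 q + H2 (fun bc : 𝒴 × 𝒳 => ∑ a, p (a, bc.1, bc.2)) - H2 p -
      H2 (fun y => ∑ x, q (x, y)) := by
    unfold condMI; simp only [hm1]
  have hfin : condMI p = condH q + tval 𝒳 e (((Fintype.card 𝒳 : ℝ) - 1) * e) := by
    rw [hMI, hS, hP, condH]; ring
  refine ⟨hfin, ?_⟩
  rw [← hfin, hMI, hS]
  by_cases hne : Nonempty 𝒳
  · have hY := margY_pos q hsupp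
    have hg := gibbs p (fun t => q (t.1, t.2.1) * pull e q (t.2.2, t.2.1) / ∑ x, q (x, t.2.1)) hp0 hp1
      (fun t => div_nonneg (mul_nonneg (hq.1 _) (hpull _).le) (hY _).le)
      (by
        rw [hperm]
        simp only [← Finset.sum_div, ← Finset.sum_mul]
        have : ∀ bc : 𝒴 × 𝒳, (∑ x, q (x, bc.1)) * pull e q (bc.2, bc.1) / ∑ x, q (x, bc.1) =
          pull e q (bc.2, bc.1) := fun bc => by have := (hY bc.1).ne'; field_simp
        simp only [this]
        rw [Fintype.sum_prod_type]
        simp only [pull_sum e q he1]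
        rw [← Fintype.sum_prod_type_right (f := q)]; exact hq.2.le)
      (fun t _ => div_pos (mul_pos (hsupp _ _) (hpull _)) (hY _))
    have hlog : ∀ t : 𝒳 × 𝒴 × 𝒳, p t * Real.logb 2 (q (t.1, t.2.1) * pull e q (t.2.2, t.2.1) / ∑ x, q (x, t.2.1)) =
      p t * Real.logb 2 (q (t.1, t.2.1)) + p t * Real.logb 2 (pull e q (t.2.2, t.2.1)) -
      p t * Real.logb 2 (∑ x, q (x, t.2.1)) := fun t => by
      rw [Real.logb_div (mul_pos (hsupp _ _) (hpull _)).ne' (hY _).ne',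
        Real.logb_mul (hsupp _ _).ne' (hpull _).ne']; ring
    simp only [hlog, Finset.sum_sub_distrib, Finset.sum_add_distrib] at hg
    have e1 : ∑ t, p t * Real.logb 2 (q (t.1, t.2.1)) = - H2 q := by
      rw [H2, neg_neg]
      simp only [Fintype.sum_prod_type, ← Finset.sum_mul, hm1]
    have e2 : ∑ t, p t * Real.logb 2 (∑ x, q (x, t.2.1)) = - H2 (fun y => ∑ x, q (x, y)) := by
      rw [← sum_margY_log]
      simp only [Fintype.sum_prod_type, ← Finset.sum_mul, hm1]
    rw [e1, e2] at hg
    have : H2 p = -∑ t, p t * Real.logb 2 (p t) := rfl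
    linarith
  · rw [not_nonempty_iff] at hne
    have := hq.2
    simp at this

/-- Limit in the auxiliary parameter of the converse bound. -/
lemma lim_tval [Nonempty 𝒳] {c r e : ℝ} (he0 : 0 ≤ e) (he1 : (Fintype.card 𝒳 : ℝ) * e < 1)
    (h : ∀ e' > 0, (Fintype.card 𝒳 : ℝ) * e' < 1 →
      c + tval 𝒳 e' (((Fintype.card 𝒳 : ℝ) - 1) * e) ≤ r) :
    c + tval 𝒳 e (((Fintype.card 𝒳 : ℝ) - 1) * e) ≤ r := by
  rcases he0.eq_or_lt with h0 | h0
  · subst h0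
    simp only [mul_zero, tval] at h ⊢
    have hk : (0:ℝ) < Fintype.card 𝒳 := by exact_mod_cast Fintype.card_pos
    have ht : Filter.Tendsto (fun e' : ℝ => c + ((1 - 0) * Real.logb 2 (1 - ((Fintype.card 𝒳 : ℝ) - 1) * e') + 0 * Real.logb 2 e'))
        (nhdsWithin 0 (Set.Ioi 0)) (nhds (c + ((1 - 0) * Real.logb 2 (1 - ((Fintype.card 𝒳 : ℝ) - 1) * 0)+ 0 ))) := by
      simp only [zero_mul, add_zero]
      apply Filter.Tendsto.mono_left _ nhdsWithin_le_nhds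
      apply ContinuousAt.tendsto (f := fun e' : ℝ => c + ((1 - 0) * Real.logb 2 (1 - ((Fintype.card 𝒳 : ℝ) - 1) * e')))
      unfold Real.logb
      have : (1 - ((Fintype.card 𝒳 : ℝ) - 1) * 0) ≠ 0 := by simp
      fun_prop (disch := assumption)
    have hle := le_of_tendsto ht (b := r) (by
      have : Set.Ioo (0:ℝ) (1 / (Fintype.card 𝒳 : ℝ)) ∈ nhdsWithin (0:ℝ) (Set.Ioi 0) :=
        Ioo_mem_nhdsGT (by positivity)
      filter_upwards [this] with e' he'
      refine h e' he'.1 ?_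
      have := he'.2
      rw [lt_div_iff₀ hk] at this
      linarith)
    simpa using hle
  · exact h e h0 he1

/-- Hamming distortion cannot exceed `0` on a one-letter alphabet. -/
lemma dHam_le (d : ℝ) {Δ e : ℝ} (he : e = d / ((Fintype.card 𝒳 : ℝ) - 1)) (hle : Δ ≤ d)
    (h1 : Subsingleton 𝒳 → Δ ≤ 0) [Nonempty 𝒳] : Δ ≤ ((Fintype.card 𝒳 : ℝ) - 1) * e := by
  by_cases h : Subsingleton 𝒳
  · have : Fintype.card 𝒳 = 1 := le_antisymm (Fintype.card_le_one_iff_subsingleton.2 h) Fintype.card_pos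
    rw [this]; simpa using h1 h
  · have h2 : 1 < Fintype.card 𝒳 := by
      by_contra h3; exact h (Fintype.card_le_one_iff_subsingleton.1 (by omega))
    have : (0:ℝ) < (Fintype.card 𝒳 : ℝ) - 1 := by
      have : (1:ℝ) < Fintype.card 𝒳 := by exact_mod_cast h2
      linarith
    rw [he]; field_simp; exact hle

lemma dHam_sub [Subsingleton 𝒳] (a b : 𝒳) : dHam a b = 0 := by
  unfold dHam; rw [if_pos (Subsingleton.elim a b)]

/-- Closed form of the conditional rate-distortion function. -/
lemma condRD_eq [Nonempty 𝒳] (q : 𝒳 × 𝒴 → ℝ) (hq : IsPmf q) (hsupp : ∀ x y, 0 < q (x, y))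
    (d e : ℝ) (hd : 0 ≤ d) (he : e = d / ((Fintype.card 𝒳 : ℝ) - 1)) (he0 : 0 ≤ e)
    (he1 : (Fintype.card 𝒳 : ℝ) * e < 1) (heq : ∀ t, e < q t) :
    condRD q (dHam (α := 𝒳)) d = condH q + tval 𝒳 e (((Fintype.card 𝒳 : ℝ) - 1) * e) := by
  unfold condRD
  obtain ⟨W, hW, hW1, hW2, -⟩ := condMI_pull q hq hsupp e he0 he1 heq
  have hDd : ((Fintype.card 𝒳 : ℝ) - 1) * e ≤ d := by
    rw [he]
    by_cases h : (Fintype.card 𝒳 : ℝ) - 1 = 0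
    · rw [h]; simpa using hd
    · field_simp; exact le_rfl
  refine IsLeast.csInf_eq ⟨⟨W, hW, hW1.le.trans hDd, hW2.symm⟩, ?_⟩
  rintro r ⟨V, hV, hV1, rfl⟩
  refine lim_tval he0 he1 fun e' he' he1' => ?_
  refine le_trans ?_ (condMI_lower q hq V hV e' he' (by linarith))
  gcongr
  refine tval_anti he' he1'.le (dHam_le d he hV1 ?_)
  intro h
  simp [dHam_sub]

/-- Converse for achievable rates, receiver 1. -/
lemma conv_ach [Nonempty 𝒳] (q : 𝒳 × 𝒴 → ℝ) (hq : IsPmf q) (hsupp : ∀ x y, 0 < q (x, y))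
    (d e r : ℝ) (he : e = d / ((Fintype.card 𝒳 : ℝ) - 1)) (he0 : 0 ≤ e)
    (he1 : (Fintype.card 𝒳 : ℝ) * e < 1)
    (h : ∀ ε > (0:ℝ), ∃ (n m : ℕ) (f : (Fin n → 𝒳) × (Fin n → 𝒴) → Fin m)
      (g1 : Fin m × (Fin n → 𝒴) → Fin n → 𝒳), 0 < n ∧ 0 < m ∧ Real.logb 2 m / n ≤ r + ε ∧
      Delta1 q dHam f g1 ≤ d + ε) :
    condH q + tval 𝒳 e (((Fintype.card 𝒳 : ℝ) - 1) * e) ≤ r := by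
  refine lim_tval he0 he1 fun e' he' he1' => ?_
  set D := ((Fintype.card 𝒳 : ℝ) - 1) * e
  have hB : Real.logb 2 e' ≤ Real.logb 2 (1 - ((Fintype.card 𝒳 : ℝ) - 1) * e') :=
    Real.logb_le_logb_of_le (by norm_num) he' (by linarith)
  have key : ∀ ε > (0:ℝ), condH q + tval 𝒳 e' (D + ε) ≤ r + ε := by
    intro ε hε
    obtain ⟨n, m, f, g1, hn, hm, hr, hD⟩ := h ε hε
    refine le_trans ?_ hr
    refine le_trans ?_ (conv_block q hq hsupp hn f g1 hm e' he' (by linarith))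
    gcongr
    refine tval_anti he' he1'.le ?_
    have := dHam_le (𝒳 := 𝒳) d (Δ := Delta1 q dHam f g1 - ε) he (by linarith) (by
      intro hs; simp [Delta1, dHam_sub]; exact hε.le)
    linarith
  by_contra hcon
  push Not at hcon
  simp only [tval_eq] at key hcon
  set A := Real.logb 2 (1 - ((Fintype.card 𝒳 : ℝ) - 1) * e')
  set B := Real.logb 2 e' - A
  have hB' : B ≤ 0 := by simp only [B]; linarith
  have hg : 0 < condH q + (A + D * B) - r := by linarith
  have hk := key ((condH q + (A + D * B) - r) / (2 * (1 - B))) (div_pos hg (by linarith))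
  set g := condH q + (A + D * B) - r with hgd
  have : g / (2 * (1 - B)) * (1 - B) = g / 2 := by
    have : 1 - B ≠ 0 := by linarith
    field_simp
  nlinarith

end TWR

namespace TWR

/-- Random binning: two distinct indices collide in a `1/M` fraction of all binnings. -/
lemma bin_count {N M : ℕ} (i j : Fin N) (hij : j ≠ i) :
    (M : ℝ) * ∑ b : Fin N → Fin M, (if b j = b i then (1:ℝ) else 0) =
      ∑ _b : Fin N → Fin M, (1:ℝ) := by
  rw [← (Equiv.funSplitAt j (Fin M)).symm.sum_comp, ← (Equiv.funSplitAt j (Fin M)).symm.sum_comp,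
    Fintype.sum_prod_type_right, Fintype.sum_prod_type_right, Finset.mul_sum]
  refine Finset.sum_congr rfl fun r _ => ?_
  have : ∀ v : Fin M, (((Equiv.funSplitAt j (Fin M)).symm (v, r) j =
      (Equiv.funSplitAt j (Fin M)).symm (v, r) i)) ↔ v = r ⟨i, hij.symm⟩ := by
    intro v
    simp [Equiv.funSplitAt, hij.symm]
  simp only [this]
  simp

lemma bin_exists {S : Type} [Fintype S] {N M : ℕ} (hM : 0 < M) (idx : S → Fin N)
    (K : S → Fin N → ℝ) (hK : ∀ s j, 0 ≤ K s j) :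
    ∃ b : Fin N → Fin M, ∑ s, ∑ j, (if j ≠ idx s ∧ b j = b (idx s) then K s j else 0) ≤
      (M:ℝ)⁻¹ * ∑ s, ∑ j, K s j := by
  have hM' : (0:ℝ) < M := by exact_mod_cast hM
  have : Nonempty (Fin N → Fin M) := ⟨fun _ => ⟨0, hM⟩⟩
  have h : ∑ b : Fin N → Fin M, ∑ s, ∑ j, (if j ≠ idx s ∧ b j = b (idx s) then K s j else 0) ≤
      ∑ _b : Fin N → Fin M, (M:ℝ)⁻¹ * ∑ s, ∑ j, K s j := by
    rw [Finset.sum_comm]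
    simp only [Finset.mul_sum]
    rw [Finset.sum_comm (s := (Finset.univ : Finset (Fin N → Fin M)))]
    refine Finset.sum_le_sum fun s _ => ?_
    rw [Finset.sum_comm]
    rw [Finset.sum_comm (s := (Finset.univ : Finset (Fin N → Fin M)))]
    refine Finset.sum_le_sum fun j _ => ?_
    by_cases hj : j = idx s
    · simp only [hj, ne_eq, not_true_eq_false, false_and, if_false]
      rw [Finset.sum_const_zero]
      exact Finset.sum_nonneg fun _ _ => mul_nonneg (by positivity) (hK _ _)
    · have hc := bin_count (M := M) (idx s) j hj
      simp only [ne_eq, hj, not_false_eq_true, true_and]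
      have e1 : ∑ b : Fin N → Fin M, (if b j = b (idx s) then K s j else 0) =
          (∑ b : Fin N → Fin M, (if b j = b (idx s) then (1:ℝ) else 0)) * K s j := by
        rw [Finset.sum_mul]; exact Finset.sum_congr rfl fun b _ => by split_ifs <;> simp
      have e2 : ∑ _b : Fin N → Fin M, (M:ℝ)⁻¹ * K s j =
          (M:ℝ)⁻¹ * ((∑ _b : Fin N → Fin M, (1:ℝ)) * K s j) := by
        rw [Finset.sum_mul, Finset.mul_sum]; simp
      rw [e1, e2, ← hc]
      apply le_of_eq; field_simp
  obtain ⟨b, -, hb⟩ := Finset.exists_le_of_sum_le (Finset.univ_nonempty) h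
  exact ⟨b, hb⟩

/-- Weighted averaging argument. -/
lemma exists_le_avg {C : Type} [Fintype C] (w F : C → ℝ) (hw : ∀ c, 0 ≤ w c) (hw1 : ∑ c, w c = 1)
    {E : ℝ} (h : ∑ c, w c * F c ≤ E) : ∃ c, F c ≤ E := by
  by_contra hcon
  push Not at hcon
  obtain ⟨c0, hc0⟩ : ∃ c, 0 < w c := by
    by_contra h0
    push Not at h0
    have : ∑ c, w c ≤ 0 := Finset.sum_nonpos fun c _ => h0 c
    linarith
  have : ∑ c, w c * E < ∑ c, w c * F c :=
    Finset.sum_lt_sum (fun c _ => mul_le_mul_of_nonneg_left (hcon c).le (hw c))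
      ⟨c0, Finset.mem_univ _, mul_lt_mul_of_pos_left (hcon c0) hc0⟩
  rw [← Finset.sum_mul, hw1] at this
  linarith

/-- One-shot covering + binning lemma. -/
lemma oneshot {A B U : Type} [Fintype A] [Fintype B] [Fintype U] (P : A × B → ℝ) (π : U → ℝ)
    (hP : ∀ s, 0 ≤ P s) (hπ : IsPmf π) (G : A × B → U → Prop) (T1 : B → U → Prop)
    (T2 : A → U → Prop) (hG1 : ∀ s u, G s u → T1 s.2 u) (hG2 : ∀ s u, G s u → T2 s.1 u)
    (N M : ℕ) (hN : 0 < N) (hM : 0 < M) :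
    ∃ (f : A × B → Fin M) (g1 : Fin M × B → U) (g2 : Fin M × A → U),
      ∑ s, (if G s (g1 (f s, s.2)) ∧ g1 (f s, s.2) = g2 (f s, s.1) then 0 else P s) ≤
      ∑ s, P s * (1 - ∑ u, if G s u then π u else 0) ^ N +
      (M:ℝ)⁻¹ * (N * ∑ s, P s * ∑ u, ((if T1 s.2 u then π u else 0) + (if T2 s.1 u then π u else 0))) := by
  set K : A × B → U → ℝ := fun s u => P s * ((if T1 s.2 u then 1 else 0) + (if T2 s.1 u then 1 else 0)) with hKdef
  have hK : ∀ s u, 0 ≤ K s u := fun s u => mul_nonneg (hP s) (by positivity)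
  -- choose the codebook
  obtain ⟨c, hc⟩ := exists_le_avg (fun c : Fin N → U => ∏ i, π (c i))
    (fun c => ∑ s, P s * (if ∀ i, ¬ G s (c i) then 1 else 0) + (M:ℝ)⁻¹ * ∑ s, ∑ j, K s (c j))
    (fun c => Finset.prod_nonneg fun _ _ => hπ.1 _) (sum_prod_one (fun _ => π) (fun _ => hπ.2))
    (E := ∑ s, P s * (1 - ∑ u, if G s u then π u else 0) ^ N +
      (M:ℝ)⁻¹ * (N * ∑ s, P s * ∑ u, ((if T1 s.2 u then π u else 0) + (if T2 s.1 u then π u else 0))))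
    (by
      simp only [mul_add (∏ _, _)]
      rw [Finset.sum_add_distrib]
      refine add_le_add (le_of_eq ?_) (le_of_eq ?_)
      · simp only [Finset.mul_sum]
        rw [Finset.sum_comm]
        refine Finset.sum_congr rfl fun s _ => ?_
        have e1 : ∀ c : Fin N → U, (∏ i, π (c i)) * (P s * (if ∀ i, ¬ G s (c i) then 1 else 0)) =
            P s * ∏ i, (if G s (c i) then 0 else π (c i)) := by
          intro c
          by_cases h : ∀ i, ¬ G s (c i)
          · rw [if_pos h, mul_one, mul_comm]; congr 1
            exact Finset.prod_congr rfl fun i _ => by rw [if_neg (h i)]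
          · rw [if_neg h]
            push Not at h
            obtain ⟨i, hi⟩ := h
            have hz : ∏ i, (if G s (c i) then 0 else π (c i)) = 0 :=
              Finset.prod_eq_zero (Finset.mem_univ i) (if_pos hi)
            rw [hz]; simp
        simp only [e1]
        rw [← Finset.mul_sum]
        congr 1
        have := Finset.prod_univ_sum (fun _ : Fin N => (Finset.univ : Finset U))
          (fun _ u => if G s u then 0 else π u)
        rw [Fintype.piFinset_univ] at this
        rw [← this, Finset.prod_const, Finset.card_univ, Fintype.card_fin]
        congr 1
        rw [← hπ.2, ← Finset.sum_sub_distrib]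
        exact Finset.sum_congr rfl fun u _ => by split_ifs <;> simp
      · have e2 : ∀ c : Fin N → U, (∏ i, π (c i)) * ((M:ℝ)⁻¹ * ∑ s, ∑ j, K s (c j)) =
          (M:ℝ)⁻¹ * ∑ s, (∏ i, π (c i)) * ∑ j, K s (c j) := by
          intro c; rw [← Finset.mul_sum]; ring
        simp only [e2]
        rw [← Finset.mul_sum, Finset.sum_comm]
        simp only [iid_first π _ hπ.2 N]
        rw [← Finset.mul_sum]
        congr 2
        refine Finset.sum_congr rfl fun s _ => ?_
        rw [Finset.mul_sum]
        refine Finset.sum_congr rfl fun u _ => ?_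
        simp only [hKdef]; split_ifs <;> ring)
  set idx : A × B → Fin N := fun s => if h : ∃ i, G s (c i) then h.choose else ⟨0, hN⟩ with hidx
  have hidx' : ∀ s, (∃ i, G s (c i)) → G s (c (idx s)) := by
    intro s h; simp only [hidx, dif_pos h]; exact h.choose_spec
  obtain ⟨b, hb⟩ := bin_exists hM idx (fun s j => K s (c j)) (fun s j => hK _ _)
  refine ⟨fun s => b (idx s),
    fun my => if h : ∃ j, b j = my.1 ∧ T1 my.2 (c j) then c h.choose else c ⟨0, hN⟩,
    fun mx => if h : ∃ j, b j = mx.1 ∧ T2 mx.2 (c j) then c h.choose else c ⟨0, hN⟩, ?_⟩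
  refine le_trans ?_ hc
  refine le_trans ?_ (add_le_add le_rfl hb)
  rw [← Finset.sum_add_distrib]
  refine Finset.sum_le_sum fun s _ => ?_
  have hn2 : ∀ j, 0 ≤ (if j ≠ idx s ∧ b j = b (idx s) then K s (c j) else 0) := by
    intro j; split_ifs; exacts [hK _ _, le_rfl]
  by_cases hcov : ∃ i, G s (c i)
  swap
  · have h1 : ∀ i, ¬ G s (c i) := by push Not at hcov; exact hcov
    have : 0 ≤ ∑ j, (if j ≠ idx s ∧ b j = b (idx s) then K s (c j) else 0) :=
      Finset.sum_nonneg fun j _ => hn2 j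
    rw [if_pos h1, mul_one]
    have := hP s
    split_ifs <;> linarith
  have hGs := hidx' s hcov
  have h0 : 0 ≤ P s * (if ∀ i, ¬ G s (c i) then 1 else 0) := mul_nonneg (hP s) (by positivity)
  by_cases hcol : ∃ j, j ≠ idx s ∧ b j = b (idx s) ∧ (T1 s.2 (c j) ∨ T2 s.1 (c j))
  · obtain ⟨j, hj1, hj2, hj3⟩ := hcol
    have h1 : P s ≤ K s (c j) := by
      simp only [hKdef]
      have := hP s
      rcases hj3 with h | h
      · rw [if_pos h]; split_ifs <;> linarith
      · rw [if_pos h]; split_ifs <;> linarith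
    have h2 : K s (c j) ≤ ∑ j, (if j ≠ idx s ∧ b j = b (idx s) then K s (c j) else 0) := by
      refine le_trans (le_of_eq ?_) (Finset.single_le_sum (fun j _ => hn2 j) (Finset.mem_univ j))
      rw [if_pos ⟨hj1, hj2⟩]
    have := hP s
    split_ifs <;> linarith
  · push Not at hcol
    have d1 : ∃ j, b j = b (idx s) ∧ T1 s.2 (c j) := ⟨idx s, rfl, hG1 _ _ hGs⟩
    have d2 : ∃ j, b j = b (idx s) ∧ T2 s.1 (c j) := ⟨idx s, rfl, hG2 _ _ hGs⟩
    have c1 : d1.choose = idx s := by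
      by_contra hne
      exact (hcol _ hne d1.choose_spec.1).1 d1.choose_spec.2
    have c2 : d2.choose = idx s := by
      by_contra hne
      exact (hcol _ hne d2.choose_spec.1).2 d2.choose_spec.2
    beta_reduce
    rw [dif_pos d1, dif_pos d2, c1, c2, if_pos ⟨hGs, rfl⟩]
    have : 0 ≤ ∑ j, (if j ≠ idx s ∧ b j = b (idx s) then K s (c j) else 0) :=
      Finset.sum_nonneg fun j _ => hn2 j
    linarith

end TWR

namespace TWR

lemma cover_bound {P g r α : ℝ} (N : ℕ) (hP : 0 ≤ P) (hg1 : g ≤ 1) (hr : 0 ≤ r)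
    (hrP : r ≤ P) (h : α * r ≤ P * g) :
    P * (1 - g) ^ N ≤ P - r + P * Real.exp (-(N * α)) := by
  rcases hP.eq_or_lt with h0 | h0
  · subst h0; simp; linarith
  set t := r / P with ht
  have ht0 : 0 ≤ t := by positivity
  have ht1 : t ≤ 1 := (div_le_one h0).2 hrP
  have hrt : r = P * t := by rw [ht]; field_simp
  have hαt : α * t ≤ g := by
    rw [hrt] at h
    exact le_of_mul_le_mul_left (by linarith) h0
  have h1 : (1 - g) ^ N ≤ Real.exp (-(N * g)) := by
    have : 1 - g ≤ Real.exp (-g) := by linarith [Real.add_one_le_exp (-g)]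
    calc (1 - g) ^ N ≤ (Real.exp (-g)) ^ N := pow_le_pow_left₀ (by linarith) this N
      _ = Real.exp (-(N * g)) := by rw [← Real.exp_nat_mul]; ring_nf
  have h2 : Real.exp (-(N * g)) ≤ Real.exp (-(N * α) * t) := by
    apply Real.exp_le_exp.2
    have : (0:ℝ) ≤ N := by positivity
    nlinarith
  have h3 : Real.exp (-(N * α) * t) ≤ t * Real.exp (-(N * α)) + (1 - t) := by
    have := convexOn_exp.2 (Set.mem_univ (-(N * α))) (Set.mem_univ (0:ℝ)) ht0 (by linarith : 0 ≤ 1 - t) (by ring)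
    simp only [smul_eq_mul, mul_zero, add_zero, Real.exp_zero, mul_one] at this
    rwa [mul_comm t (-(N * α))] at this
  have h4 : (1 - g) ^ N ≤ 1 - t + Real.exp (-(N * α)) := by
    have : t * Real.exp (-(N * α)) ≤ Real.exp (-(N * α)) :=
      mul_le_of_le_one_left (Real.exp_pos _).le ht1
    linarith
  rw [hrt]
  have := mul_le_mul_of_nonneg_left h4 hP
  linarith

/-- Change of measure bound for a decoder typicality test. -/
lemma T_bound {B U : Type} [Fintype B] [Fintype U] (qB : B → ℝ) (π : U → ℝ) (ρ : B × U → ℝ)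
    (hq : ∀ b, 0 ≤ qB b) (hπ : ∀ u, 0 ≤ π u) (hρ : ∀ t, 0 ≤ ρ t)
    (hs : ∑ t : B × U, ρ t * qB t.1 * π t.2 = 1) (c : ℝ) (hc : 0 < c) (n : ℕ) :
    ∑ y : Fin n → B, (∏ i, qB (y i)) * ∑ u : Fin n → U,
      (if c ≤ ∏ i, ρ (y i, u i) then ∏ i, π (u i) else 0) ≤ c⁻¹ := by
  have h1 : ∑ yu : (Fin n → B) × (Fin n → U), ∏ i, (ρ (yu.1 i, yu.2 i) * qB (yu.1 i) * π (yu.2 i)) = 1 := by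
    rw [sum_blocks]
    exact sum_prod_one (fun _ : Fin n => fun t : B × U => ρ t * qB t.1 * π t.2) (fun _ => hs)
  rw [Fintype.sum_prod_type] at h1
  rw [← mul_one c⁻¹, ← h1, Finset.mul_sum]
  refine Finset.sum_le_sum fun y _ => ?_
  rw [Finset.mul_sum, Finset.mul_sum]
  refine Finset.sum_le_sum fun u _ => ?_
  simp only [Finset.prod_mul_distrib]
  have a1 : 0 ≤ ∏ i, qB (y i) := Finset.prod_nonneg fun _ _ => hq _
  have a2 : 0 ≤ ∏ i, π (u i) := Finset.prod_nonneg fun _ _ => hπ _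
  have a3 : 0 ≤ ∏ i, ρ (y i, u i) := Finset.prod_nonneg fun _ _ => hρ _
  split_ifs with h
  · have : 1 ≤ c⁻¹ * ∏ i, ρ (y i, u i) := by
      rw [inv_mul_eq_div, le_div_iff₀ hc, one_mul]; exact h
    have := mul_le_mul_of_nonneg_right this (mul_nonneg a1 a2)
    linarith
  · rw [mul_zero]; positivity

lemma prod_two_rpow {α : Type} {n : ℕ} (ρ : α → ℝ) (w : Fin n → α) (h : ∀ i, 0 < ρ (w i)) :
    ∏ i, ρ (w i) = (2:ℝ) ^ (∑ i, Real.logb 2 (ρ (w i))) := by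
  rw [Real.rpow_sum_of_pos (by norm_num)]
  exact Finset.prod_congr rfl fun i _ => (Real.rpow_logb (by norm_num) (by norm_num) (h i)).symm

lemma sum_iid_marg {A B : Type} [Fintype A] [Fintype B] (q : A × B → ℝ) {n : ℕ} (y : Fin n → B) :
    ∑ x : Fin n → A, iid q n (x, y) = ∏ i, ∑ a, q (a, y i) := by
  have := Finset.prod_univ_sum (fun _ : Fin n => (Finset.univ : Finset A)) (fun i a => q (a, y i))
  rw [Fintype.piFinset_univ] at this
  rw [this]; rfl

lemma sum_iid_marg' {A B : Type} [Fintype A] [Fintype B] (q : A × B → ℝ) {n : ℕ} (x : Fin n → A) :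
    ∑ y : Fin n → B, iid q n (x, y) = ∏ i, ∑ b, q (x i, b) := by
  have := Finset.prod_univ_sum (fun _ : Fin n => (Finset.univ : Finset B)) (fun i b => q (x i, b))
  rw [Fintype.piFinset_univ] at this
  rw [this]; rfl

/-- Fixed-blocklength coding lemma. -/
lemma iid_code_n {A B U : Type} [Fintype A] [Fintype B] [Fintype U]
    (p ρ : (A × B) × U → ℝ) (q : A × B → ℝ) (π : U → ℝ) (ρ1 : B × U → ℝ) (ρ2 : A × U → ℝ)
    (φ1 : A × U → ℝ) (φ2 : B × U → ℝ)
    (hp : IsPmf p) (hq : IsPmf q) (hπ : IsPmf π) (hqm : ∀ s, ∑ u, p (s, u) = q s)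
    (hρ : ∀ t, 0 ≤ ρ t) (hρ1 : ∀ t, 0 ≤ ρ1 t) (hρ2 : ∀ t, 0 ≤ ρ2 t)
    (h0 : ∀ s u, p (s, u) = ρ (s, u) * q s * π u)
    (h1 : ∀ b u, ∑ a, p ((a, b), u) = ρ1 (b, u) * (∑ a, q (a, b)) * π u)
    (h2 : ∀ a u, ∑ b, p ((a, b), u) = ρ2 (a, u) * (∑ b, q (a, b)) * π u)
    (I I1 I2 D1 D2 : ℝ)
    (hI : I = ∑ t, p t * Real.logb 2 (ρ t))
    (hI1 : I1 = ∑ t, p t * Real.logb 2 (ρ1 (t.1.2, t.2)))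
    (hI2 : I2 = ∑ t, p t * Real.logb 2 (ρ2 (t.1.1, t.2)))
    (hD1 : D1 = ∑ t, p t * φ1 (t.1.1, t.2))
    (hD2 : D2 = ∑ t, p t * φ2 (t.1.2, t.2))
    (δ : ℝ) (hδ : 0 < δ) :
    ∃ V : ℝ, ∀ (n N M : ℕ), 0 < n → 0 < N → 0 < M →
    ∃ (f : (Fin n → A) × (Fin n → B) → Fin M) (g1 : Fin M × (Fin n → B) → Fin n → U)
      (g2 : Fin M × (Fin n → A) → Fin n → U),
      ∑ s, (if (∑ i, φ1 (s.1 i, g1 (f s, s.2) i) ≤ n * (D1 + δ) ∧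
          ∑ i, φ2 (s.2 i, g1 (f s, s.2) i) ≤ n * (D2 + δ)) ∧
          g1 (f s, s.2) = g2 (f s, s.1) then 0 else iid q n s) ≤
        V / (n * δ ^ 2) + Real.exp (-(N * (2:ℝ) ^ (-(n * (I + δ))))) +
        (M:ℝ)⁻¹ * (N * ((2:ℝ) ^ (-(n * (I1 - δ))) + (2:ℝ) ^ (-(n * (I2 - δ))))) := by
  set v : ((A × B) × U → ℝ) → ℝ := fun ψ => ∑ a, p a * (ψ a - ∑ a, p a * ψ a) ^ 2 with hv
  refine ⟨v (fun t => Real.logb 2 (ρ t)) + v (fun t => Real.logb 2 (ρ1 (t.1.2, t.2))) +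
    v (fun t => Real.logb 2 (ρ2 (t.1.1, t.2))) + v (fun t => φ1 (t.1.1, t.2)) +
    v (fun t => φ2 (t.1.2, t.2)), ?_⟩
  intro n N M hn hN hM
  have hn' : (0:ℝ) < n := by exact_mod_cast hn
  set T1 : (Fin n → B) → (Fin n → U) → Prop := fun y u =>
    (2:ℝ) ^ (n * (I1 - δ)) ≤ ∏ i, ρ1 (y i, u i) with hT1
  set T2 : (Fin n → A) → (Fin n → U) → Prop := fun x u =>
    (2:ℝ) ^ (n * (I2 - δ)) ≤ ∏ i, ρ2 (x i, u i) with hT2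
  set G : (Fin n → A) × (Fin n → B) → (Fin n → U) → Prop := fun s u =>
    (∏ i, ρ ((s.1 i, s.2 i), u i) ≤ (2:ℝ) ^ (n * (I + δ)) ∧ T1 s.2 u ∧ T2 s.1 u) ∧
    (∑ i, φ1 (s.1 i, u i) ≤ n * (D1 + δ) ∧ ∑ i, φ2 (s.2 i, u i) ≤ n * (D2 + δ)) with hG
  set πn : (Fin n → U) → ℝ := fun u => ∏ i, π (u i) with hπn
  have hπn0 : ∀ u, 0 ≤ πn u := fun u => Finset.prod_nonneg fun _ _ => hπ.1 _
  have hπn1 : ∑ u, πn u = 1 := sum_prod_one (fun _ => π) (fun _ => hπ.2)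
  obtain ⟨f, g1, g2, hfg⟩ := oneshot (iid q n) πn (iid_nonneg q hq n) ⟨hπn0, hπn1⟩ G T1 T2
    (fun s u h => h.1.2.1) (fun s u h => h.1.2.2) N M hN hM
  refine ⟨f, g1, g2, le_trans ?_ (le_trans hfg (add_le_add ?_ ?_))⟩
  · refine Finset.sum_le_sum fun s _ => ?_
    by_cases h : G s (g1 (f s, s.2)) ∧ g1 (f s, s.2) = g2 (f s, s.1)
    · rw [if_pos h, if_pos ⟨h.1.2, h.2⟩]
    · rw [if_neg h]; have := iid_nonneg q hq n s; split_ifs <;> linarith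
  · -- covering term
    set pn : (Fin n → A) × (Fin n → B) → (Fin n → U) → ℝ := fun s u =>
      ∏ i, p ((s.1 i, s.2 i), u i) with hpn
    have hpn0 : ∀ s u, 0 ≤ pn s u := fun s u => Finset.prod_nonneg fun _ _ => hp.1 _
    have hpnm : ∀ s, ∑ u, pn s u = iid q n s := by
      intro s
      have := Finset.prod_univ_sum (fun _ : Fin n => (Finset.univ : Finset U))
        (fun i u => p ((s.1 i, s.2 i), u))
      rw [Fintype.piFinset_univ] at this
      rw [← this]; simp only [hqm]; rfl
    set α := (2:ℝ) ^ (-(n * (I + δ))) with hα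
    have hαpos : 0 < α := by positivity
    have hcov : ∀ s, iid q n s * (1 - ∑ u, if G s u then πn u else 0) ^ N ≤
        (∑ u, if G s u then 0 else pn s u) + iid q n s * Real.exp (-(N * α)) := by
      intro s
      have hsplit : iid q n s - (∑ u, if G s u then pn s u else 0) = ∑ u, if G s u then 0 else pn s u := by
        rw [← hpnm, ← Finset.sum_sub_distrib]
        exact Finset.sum_congr rfl fun u _ => by split_ifs <;> simp
      rw [← hsplit]
      refine cover_bound N (iid_nonneg q hq n s) ?_ ?_ ?_ ?_
      · rw [← hπn1]
        refine Finset.sum_le_sum fun u _ => ?_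
        split_ifs; exacts [le_rfl, hπn0 u]
      · exact Finset.sum_nonneg fun u _ => by split_ifs; exacts [hpn0 s u, le_rfl]
      · rw [← hpnm]
        refine Finset.sum_le_sum fun u _ => ?_
        split_ifs; exacts [le_rfl, hpn0 s u]
      · rw [Finset.mul_sum, Finset.mul_sum]
        refine Finset.sum_le_sum fun u _ => ?_
        split_ifs with hGs
        · have e : pn s u = (∏ i, ρ ((s.1 i, s.2 i), u i)) * (iid q n s * πn u) := by
            simp only [hpn, h0, Finset.prod_mul_distrib, iid, hπn]; ring
          rw [e]
          have hc : α * ∏ i, ρ ((s.1 i, s.2 i), u i) ≤ 1 := by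
            calc α * ∏ i, ρ ((s.1 i, s.2 i), u i) ≤ α * (2:ℝ) ^ (n * (I + δ)) := by
                  gcongr; exact hGs.1.1
              _ = 1 := by rw [hα, ← Real.rpow_add (by norm_num)]; simp
          have := mul_le_mul_of_nonneg_right hc (mul_nonneg (iid_nonneg q hq n s) (hπn0 u))
          linarith
        · simp
    have hcov' := Finset.sum_le_sum (fun s (_ : s ∈ (Finset.univ : Finset ((Fin n → A) × (Fin n → B)))) => hcov s)
    refine le_trans (le_of_eq ?_) (le_trans hcov' ?_)
    · congr!
    rw [Finset.sum_add_distrib, ← Finset.sum_mul, iid_sum q hq, one_mul]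
    gcongr
    -- weak law
    have hre : ∑ s, ∑ u, (if G s u then 0 else pn s u) =
        ∑ w : Fin n → (A × B) × U, (if G (fun i => (w i).1.1, fun i => (w i).1.2) (fun i => (w i).2)
          then 0 else ∏ i, p (w i)) := by
      rw [sum_blocks]
      rw [← Fintype.sum_prod_type (f := fun t : (Fin n → A × B) × (Fin n → U) =>
        if G (fun i => (t.1 i).1, fun i => (t.1 i).2) t.2 then 0
        else pn (fun i => (t.1 i).1, fun i => (t.1 i).2) t.2)]
      rw [sum_blocks]
    rw [hre]
    have c1 := iid_cheb p (fun t => Real.logb 2 (ρ t)) hp.1 hp.2 δ hδ n hn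
    have c2 := iid_cheb p (fun t => Real.logb 2 (ρ1 (t.1.2, t.2))) hp.1 hp.2 δ hδ n hn
    have c3 := iid_cheb p (fun t => Real.logb 2 (ρ2 (t.1.1, t.2))) hp.1 hp.2 δ hδ n hn
    have c4 := iid_cheb p (fun t => φ1 (t.1.1, t.2)) hp.1 hp.2 δ hδ n hn
    have c5 := iid_cheb p (fun t => φ2 (t.1.2, t.2)) hp.1 hp.2 δ hδ n hn
    simp only [add_div]
    refine le_trans ?_ (add_le_add (add_le_add (add_le_add (add_le_add c1 c2) c3) c4) c5)
    rw [← Finset.sum_add_distrib, ← Finset.sum_add_distrib, ← Finset.sum_add_distrib,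
      ← Finset.sum_add_distrib]
    refine Finset.sum_le_sum fun w _ => ?_
    have hw0 : 0 ≤ ∏ i, p (w i) := Finset.prod_nonneg fun _ _ => hp.1 _
    rw [← hI, ← hI1, ← hI2, ← hD1, ← hD2]
    rcases hw0.eq_or_lt with hz | hz
    · rw [← hz]; simp
    have hpi : ∀ i, 0 < p (w i) := by
      intro i
      refine lt_of_le_of_ne (hp.1 _) fun hzero => ?_
      exact hz.ne' (Finset.prod_eq_zero (Finset.mem_univ i) hzero.symm)
    have hρi : ∀ i, 0 < ρ (w i) := by
      intro i
      refine lt_of_le_of_ne (hρ _) fun hzero => ?_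
      have := hpi i
      rw [show w i = ((w i).1, (w i).2) from rfl, h0] at this
      rw [show ((w i).1, (w i).2) = w i from rfl, ← hzero] at this
      simp at this
    have hρ1i : ∀ i, 0 < ρ1 ((w i).1.2, (w i).2) := by
      intro i
      refine lt_of_le_of_ne (hρ1 _) fun hzero => ?_
      have h3 := h1 (w i).1.2 (w i).2
      rw [← hzero] at h3
      have h4 : p (w i) ≤ ∑ a, p ((a, (w i).1.2), (w i).2) :=
        Finset.single_le_sum (f := fun a => p ((a, (w i).1.2), (w i).2)) (fun _ _ => hp.1 _)
          (Finset.mem_univ (w i).1.1)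
      have := hpi i
      rw [h3] at h4; simp at h4; linarith
    have hρ2i : ∀ i, 0 < ρ2 ((w i).1.1, (w i).2) := by
      intro i
      refine lt_of_le_of_ne (hρ2 _) fun hzero => ?_
      have h3 := h2 (w i).1.1 (w i).2
      rw [← hzero] at h3
      have h4 : p (w i) ≤ ∑ b, p (((w i).1.1, b), (w i).2) :=
        Finset.single_le_sum (f := fun b => p (((w i).1.1, b), (w i).2)) (fun _ _ => hp.1 _)
          (Finset.mem_univ (w i).1.2)
      have := hpi i
      rw [h3] at h4; simp at h4; linarith
    by_cases b1 : |∑ i, Real.logb 2 (ρ (w i)) - n * I| ≤ n * δ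
    swap
    · rw [if_neg b1]; split_ifs <;> linarith
    by_cases b2 : |∑ i, Real.logb 2 (ρ1 ((w i).1.2, (w i).2)) - n * I1| ≤ n * δ
    swap
    · rw [if_neg b2]; split_ifs <;> linarith
    by_cases b3 : |∑ i, Real.logb 2 (ρ2 ((w i).1.1, (w i).2)) - n * I2| ≤ n * δ
    swap
    · rw [if_neg b3]; split_ifs <;> linarith
    by_cases b4 : |∑ i, φ1 ((w i).1.1, (w i).2) - n * D1| ≤ n * δ
    swap
    · rw [if_neg b4]; split_ifs <;> linarith
    by_cases b5 : |∑ i, φ2 ((w i).1.2, (w i).2) - n * D2| ≤ n * δ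
    swap
    · rw [if_neg b5]; split_ifs <;> linarith
    have hGw : G (fun i => (w i).1.1, fun i => (w i).1.2) (fun i => (w i).2) := by
      rw [abs_le] at b1 b2 b3 b4 b5
      refine ⟨⟨?_, ?_, ?_⟩, ?_, ?_⟩
      · have := prod_two_rpow ρ w hρi
        change ∏ i, ρ (w i) ≤ _
        rw [this]
        exact Real.rpow_le_rpow_of_exponent_le (by norm_num) (by linarith [b1.2])
      · have := prod_two_rpow (fun t : (A × B) × U => ρ1 (t.1.2, t.2)) w hρ1i
        change _ ≤ ∏ i, ρ1 ((w i).1.2, (w i).2)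
        rw [this]
        exact Real.rpow_le_rpow_of_exponent_le (by norm_num) (by linarith [b2.1])
      · have := prod_two_rpow (fun t : (A × B) × U => ρ2 (t.1.1, t.2)) w hρ2i
        change _ ≤ ∏ i, ρ2 ((w i).1.1, (w i).2)
        rw [this]
        exact Real.rpow_le_rpow_of_exponent_le (by norm_num) (by linarith [b3.1])
      · change ∑ i, φ1 ((w i).1.1, (w i).2) ≤ _
        linarith [b4.2]
      · change ∑ i, φ2 ((w i).1.2, (w i).2) ≤ _
        linarith [b5.2]
    rw [if_pos hGw]
    split_ifs; simp
  · -- binning term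
    have hM' : (0:ℝ) < M := by exact_mod_cast hM
    gcongr
    simp only [Finset.sum_add_distrib, mul_add]
    refine add_le_add ?_ ?_
    · have := T_bound (fun b => ∑ a, q (a, b)) π ρ1 (fun b => Finset.sum_nonneg fun _ _ => hq.1 _) hπ.1 hρ1
        (by
          simp only [Fintype.sum_prod_type, ← h1]
          rw [← hp.2, Fintype.sum_prod_type, Fintype.sum_prod_type_right]
          exact Finset.sum_congr rfl fun b _ => Finset.sum_comm)
        ((2:ℝ) ^ (n * (I1 - δ))) (by positivity) n
      rw [← Real.rpow_neg (by norm_num)] at this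
      refine le_trans (le_of_eq ?_) this
      rw [Fintype.sum_prod_type_right]
      refine Finset.sum_congr rfl fun y _ => ?_
      dsimp only
      rw [← sum_iid_marg, Finset.sum_mul]
    · have := T_bound (fun a => ∑ b, q (a, b)) π ρ2 (fun b => Finset.sum_nonneg fun _ _ => hq.1 _) hπ.1 hρ2
        (by
          simp only [Fintype.sum_prod_type, ← h2]
          rw [← hp.2, Fintype.sum_prod_type, Fintype.sum_prod_type]
          exact Finset.sum_congr rfl fun b _ => Finset.sum_comm)
        ((2:ℝ) ^ (n * (I2 - δ))) (by positivity) n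
      rw [← Real.rpow_neg (by norm_num)] at this
      refine le_trans (le_of_eq ?_) this
      rw [Fintype.sum_prod_type]
      refine Finset.sum_congr rfl fun y _ => ?_
      dsimp only
      rw [← sum_iid_marg', Finset.sum_mul]

end TWR

namespace TWR

/-- Choice of parameters in the asymptotic coding lemma. -/
lemma choose_params (V I I1 I2 F ε : ℝ) (hI0 : 0 ≤ I) (hF0 : 0 ≤ F) (hF1 : I - I1 ≤ F)
    (hF2 : I - I2 ≤ F) (hε : 0 < ε) (δ : ℝ) (hδ : δ = ε / 8) :
    ∃ n N M : ℕ, 0 < n ∧ 0 < N ∧ 0 < M ∧ Real.logb 2 M / n ≤ F + ε ∧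
      V / (n * δ ^ 2) + Real.exp (-(N * (2:ℝ) ^ (-(n * (I + δ))))) +
        (M:ℝ)⁻¹ * (N * ((2:ℝ) ^ (-(n * (I1 - δ))) + (2:ℝ) ^ (-(n * (I2 - δ))))) ≤ ε := by
  have hδ0 : 0 < δ := by rw [hδ]; positivity
  have l1 : Filter.Tendsto (fun n : ℕ => V / (n * δ ^ 2)) Filter.atTop (nhds 0) := by
    have := (tendsto_const_div_atTop_nhds_zero_nat (V / δ ^ 2))
    refine this.congr fun n => ?_
    rw [div_div, mul_comm]
  have l2 : Filter.Tendsto (fun n : ℕ => 5 * ((2:ℝ) ^ (-δ)) ^ n) Filter.atTop (nhds 0) := by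
    have : (2:ℝ) ^ (-δ) < 1 := Real.rpow_lt_one_of_one_lt_of_neg (by norm_num) (by linarith)
    simpa using (tendsto_pow_atTop_nhds_zero_of_lt_one (by positivity) this).const_mul 5
  have l3 : Filter.Tendsto (fun n : ℕ => (1:ℝ) / n) Filter.atTop (nhds 0) :=
    tendsto_one_div_atTop_nhds_zero_nat
  have e1 := (l1.add l2).eventually (gt_mem_nhds (show (0:ℝ) + 0 < ε by simpa using hε))
  have e2 := l3.eventually (gt_mem_nhds hδ0)
  obtain ⟨n, ⟨h1, h2⟩, hn⟩ := ((e1.and e2).and (Filter.eventually_gt_atTop 0)).exists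
  have hn' : (0:ℝ) < n := by exact_mod_cast hn
  set x := (2:ℝ) ^ (n * (I + 2 * δ)) with hx
  set z := (2:ℝ) ^ (n * (F + 4 * δ)) with hz
  have hx1 : 1 ≤ x := Real.one_le_rpow (by norm_num) (by positivity)
  have hz1 : 1 ≤ z := Real.one_le_rpow (by norm_num) (by positivity)
  set w := (2:ℝ) ^ (-(n * δ)) with hw
  have hw0 : 0 < w := by positivity
  have hwn : ((2:ℝ) ^ (-δ)) ^ n = w := by
    rw [← Real.rpow_natCast, ← Real.rpow_mul (by norm_num), hw]; congr 1; ring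
  rw [hwn] at h1
  have hNx : x ≤ (⌈x⌉₊ : ℝ) := Nat.le_ceil x
  have hNx2 : (⌈x⌉₊ : ℝ) ≤ 2 * x := by linarith [Nat.ceil_lt_add_one (by linarith : 0 ≤ x)]
  have hMz : z ≤ (⌈z⌉₊ : ℝ) := Nat.le_ceil z
  have hMz2 : (⌈z⌉₊ : ℝ) ≤ 2 * z := by linarith [Nat.ceil_lt_add_one (by linarith : 0 ≤ z)]
  refine ⟨n, ⌈x⌉₊, ⌈z⌉₊, hn, Nat.ceil_pos.2 (by linarith), Nat.ceil_pos.2 (by linarith), ?_, ?_⟩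
  · have : Real.logb 2 (⌈z⌉₊ : ℝ) ≤ 1 + n * (F + 4 * δ) := by
      calc Real.logb 2 (⌈z⌉₊ : ℝ) ≤ Real.logb 2 (2 * z) :=
            Real.logb_le_logb_of_le (by norm_num) (by linarith) hMz2
        _ = 1 + n * (F + 4 * δ) := by
            rw [Real.logb_mul (by norm_num) (by linarith), hz, Real.logb_rpow (by norm_num) (by norm_num),
              Real.logb_self_eq_one (by norm_num)]
    rw [div_le_iff₀ hn']
    have h3 : 1 ≤ n * δ := by
      rw [div_lt_iff₀ hn'] at h2; linarith
    have : (F + ε) * n = n * (F + 4 * δ) + n * δ * 4 := by rw [hδ]; ring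
    linarith
  · have a1 : Real.exp (-((⌈x⌉₊ : ℝ) * (2:ℝ) ^ (-(n * (I + δ))))) ≤ w := by
      have hb : w⁻¹ ≤ (⌈x⌉₊ : ℝ) * (2:ℝ) ^ (-(n * (I + δ))) := by
        calc w⁻¹ = x * (2:ℝ) ^ (-(n * (I + δ))) := by
              rw [hw, hx, ← Real.rpow_add (by norm_num), ← Real.rpow_neg (by norm_num)]
              congr 1; ring
          _ ≤ _ := by gcongr
      rw [Real.exp_neg]
      have : w⁻¹ ≤ Real.exp ((⌈x⌉₊ : ℝ) * (2:ℝ) ^ (-(n * (I + δ)))) := by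
        linarith [Real.add_one_le_exp ((⌈x⌉₊ : ℝ) * (2:ℝ) ^ (-(n * (I + δ))))]
      exact inv_le_of_inv_le₀ hw0 this
    have b : ∀ J, I - J ≤ F → (⌈z⌉₊ : ℝ)⁻¹ * ((⌈x⌉₊ : ℝ) * (2:ℝ) ^ (-(n * (J - δ)))) ≤ 2 * w := by
      intro J hJ
      calc (⌈z⌉₊ : ℝ)⁻¹ * ((⌈x⌉₊ : ℝ) * (2:ℝ) ^ (-(n * (J - δ)))) ≤
            z⁻¹ * (2 * x * (2:ℝ) ^ (-(n * (J - δ)))) := by gcongr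
        _ = 2 * (2:ℝ) ^ (n * (I - J - F) + -(n * δ)) := by
            rw [hz, hx, ← Real.rpow_neg (by norm_num), mul_assoc, ← Real.rpow_add (by norm_num),
              mul_left_comm, ← Real.rpow_add (by norm_num)]
            congr 2; ring
        _ ≤ 2 * w := by
            rw [hw]
            gcongr
            · norm_num
            · nlinarith
    have b1 := b I1 hF1
    have b2 := b I2 hF2
    have b3 : ∀ a b c d : ℝ, a * (b * (c + d)) = a * (b * c) + a * (b * d) := by intros; ring
    rw [b3]
    linarith

/-- Asymptotic coding lemma. -/
lemma iid_code {A B U : Type} [Fintype A] [Fintype B] [Fintype U]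
    (p ρ : (A × B) × U → ℝ) (q : A × B → ℝ) (π : U → ℝ) (ρ1 : B × U → ℝ) (ρ2 : A × U → ℝ)
    (φ1 : A × U → ℝ) (φ2 : B × U → ℝ)
    (hp : IsPmf p) (hq : IsPmf q) (hπ : IsPmf π) (hqm : ∀ s, ∑ u, p (s, u) = q s)
    (hρ : ∀ t, 0 ≤ ρ t) (hρ1 : ∀ t, 0 ≤ ρ1 t) (hρ2 : ∀ t, 0 ≤ ρ2 t)
    (h0 : ∀ s u, p (s, u) = ρ (s, u) * q s * π u)
    (h1 : ∀ b u, ∑ a, p ((a, b), u) = ρ1 (b, u) * (∑ a, q (a, b)) * π u)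
    (h2 : ∀ a u, ∑ b, p ((a, b), u) = ρ2 (a, u) * (∑ b, q (a, b)) * π u)
    (I I1 I2 D1 D2 : ℝ)
    (hI : I = ∑ t, p t * Real.logb 2 (ρ t))
    (hI1 : I1 = ∑ t, p t * Real.logb 2 (ρ1 (t.1.2, t.2)))
    (hI2 : I2 = ∑ t, p t * Real.logb 2 (ρ2 (t.1.1, t.2)))
    (hD1 : D1 = ∑ t, p t * φ1 (t.1.1, t.2))
    (hD2 : D2 = ∑ t, p t * φ2 (t.1.2, t.2))
    (F ε : ℝ) (hI0 : 0 ≤ I) (hF0 : 0 ≤ F) (hF1 : I - I1 ≤ F) (hF2 : I - I2 ≤ F) (hε : 0 < ε) :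
    ∃ (n M : ℕ) (f : (Fin n → A) × (Fin n → B) → Fin M) (g1 : Fin M × (Fin n → B) → Fin n → U)
      (g2 : Fin M × (Fin n → A) → Fin n → U), 0 < n ∧ Real.logb 2 M / n ≤ F + ε ∧
      ∑ s, (if (∑ i, φ1 (s.1 i, g1 (f s, s.2) i) ≤ n * (D1 + ε) ∧
          ∑ i, φ2 (s.2 i, g1 (f s, s.2) i) ≤ n * (D2 + ε)) ∧
          g1 (f s, s.2) = g2 (f s, s.1) then 0 else iid q n s) ≤ ε := by
  obtain ⟨V, hV⟩ := iid_code_n p ρ q π ρ1 ρ2 φ1 φ2 hp hq hπ hqm hρ hρ1 hρ2 h0 h1 h2 I I1 I2 D1 D2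
    hI hI1 hI2 hD1 hD2 (ε / 8) (by positivity)
  obtain ⟨n, N, M, hn, hN, hM, hr, he⟩ := choose_params V I I1 I2 F ε hI0 hF0 hF1 hF2 hε _ rfl
  obtain ⟨f, g1, g2, hfg⟩ := hV n N M hn hN hM
  refine ⟨n, M, f, g1, g2, hn, hr, le_trans (Finset.sum_le_sum fun s _ => ?_) (le_trans hfg he)⟩
  have hn' : (0:ℝ) < n := by exact_mod_cast hn
  have m : ∀ D : ℝ, n * (D + ε / 8) ≤ n * (D + ε) := fun D => by gcongr; linarith
  have := iid_nonneg q hq n s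
  split_ifs with a b b
  · exact le_rfl
  · exact this
  · exact absurd ⟨⟨b.1.1.trans (m _), b.1.2.trans (m _)⟩, b.2⟩ a
  · exact le_rfl

end TWR

namespace TWR

variable {𝒳 𝒴 : Type} [Fintype 𝒳] [Fintype 𝒴]

lemma swap_pmf (q : 𝒳 × 𝒴 → ℝ) (hq : IsPmf q) : IsPmf (swap q) := by
  refine ⟨fun t => hq.1 _, ?_⟩
  rw [← hq.2, Fintype.sum_prod_type, Fintype.sum_prod_type_right]
  rfl

lemma swap_H2 (q : 𝒳 × 𝒴 → ℝ) : H2 (swap q) = H2 q := by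
  unfold H2
  rw [Fintype.sum_prod_type, Fintype.sum_prod_type_right]
  rfl

lemma pull_pmf (e : ℝ) (he0 : 0 ≤ e) (q : 𝒳 × 𝒴 → ℝ) (hq : IsPmf q)
    (h : (Fintype.card 𝒳 : ℝ) * e < 1) (ht : ∀ t, e ≤ q t) : IsPmf (pull e q) := by
  refine ⟨fun t => le_trans (by linarith [ht t]) (pull_ge e he0 q hq h t (ht t)), ?_⟩
  rw [← hq.2, Fintype.sum_prod_type_right, Fintype.sum_prod_type_right]
  exact Finset.sum_congr rfl fun y _ => pull_sum e q h y

lemma info_nonneg {S U : Type} [Fintype S] [Fintype U] (p ρ : S × U → ℝ) (q : S → ℝ) (π : U → ℝ)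
    (hp : IsPmf p) (hq : IsPmf q) (hπ : IsPmf π) (hρ : ∀ t, 0 ≤ ρ t)
    (h0 : ∀ s u, p (s, u) = ρ (s, u) * q s * π u) : 0 ≤ ∑ t, p t * Real.logb 2 (ρ t) := by
  have hpos : ∀ t, 0 < p t → 0 < ρ t ∧ 0 < q t.1 ∧ 0 < π t.2 := by
    rintro ⟨s, u⟩ h
    rw [h0] at h
    refine ⟨lt_of_le_of_ne (hρ _) ?_, lt_of_le_of_ne (hq.1 _) ?_, lt_of_le_of_ne (hπ.1 _) ?_⟩ <;>
    · intro hz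
      simp [← hz] at h
  have g := gibbs p (fun t => q t.1 * π t.2) hp.1 hp.2 (fun t => mul_nonneg (hq.1 _) (hπ.1 _))
    (by
      rw [Fintype.sum_prod_type]
      simp only [← Finset.mul_sum, hπ.2, mul_one, hq.2, le_refl])
    (fun t h => mul_pos (hpos t h).2.1 (hpos t h).2.2)
  have : ∑ t, p t * Real.logb 2 (ρ t) =
      ∑ t, p t * Real.logb 2 (p t) - ∑ t, p t * Real.logb 2 (q t.1 * π t.2) := by
    rw [← Finset.sum_sub_distrib]
    refine Finset.sum_congr rfl fun t _ => ?_
    rcases (hp.1 t).eq_or_lt with h | h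
    · rw [← h]; simp
    · obtain ⟨a, b, c⟩ := hpos t h
      have e : p t = ρ t * (q t.1 * π t.2) := by rw [← mul_assoc]; exact h0 t.1 t.2
      conv_rhs => rw [e, Real.logb_mul a.ne' (mul_pos b c).ne']
      rw [← e]; ring
  rw [this]; linarith

/-- The code for the concrete test channel. -/
lemma hamming_code (q : 𝒳 × 𝒴 → ℝ) (hq : IsPmf q) (hsupp : ∀ x y, 0 < q (x, y))
    [Nonempty 𝒳] [Nonempty 𝒴]
    (e1 e2 : ℝ) (he1 : 0 ≤ e1) (he2 : 0 ≤ e2) (hk : (Fintype.card 𝒳 : ℝ) * e1 < 1)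
    (hl : (Fintype.card 𝒴 : ℝ) * e2 < 1) (hm : ∀ t, e1 + e2 ≤ q t)
    (D1 D2 F : ℝ) (hD1 : D1 = ((Fintype.card 𝒳 : ℝ) - 1) * e1)
    (hD2 : D2 = ((Fintype.card 𝒴 : ℝ) - 1) * e2) (hF0 : 0 ≤ F)
    (hF1 : condH q + tval 𝒳 e1 D1 ≤ F) (hF2 : condH (swap q) + tval 𝒴 e2 D2 ≤ F)
    (ε : ℝ) (hε : 0 < ε) :
    ∃ (n M : ℕ) (f : (Fin n → 𝒳) × (Fin n → 𝒴) → Fin M)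
      (g1 : Fin M × (Fin n → 𝒴) → Fin n → 𝒳 × 𝒴)
      (g2 : Fin M × (Fin n → 𝒳) → Fin n → 𝒳 × 𝒴), 0 < n ∧ Real.logb 2 M / n ≤ F + ε ∧
      ∑ s, (if (∑ i, dHam (s.1 i) (g1 (f s, s.2) i).1 ≤ n * (D1 + ε) ∧
          ∑ i, dHam (s.2 i) (g1 (f s, s.2) i).2 ≤ n * (D2 + ε)) ∧
          g1 (f s, s.2) = g2 (f s, s.1) then 0 else iid q n s) ≤ ε := by
  set q1 := pull e1 q with hq1
  have q1p : IsPmf q1 := pull_pmf e1 he1 q hq hk fun t => by linarith [hm t]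
  have q1ge : ∀ t, e2 ≤ q1 t := fun t =>
    le_trans (by linarith [hm t]) (pull_ge e1 he1 q hq hk t (by linarith [hm t]))
  set q2 := pull e2 (swap q1) with hq2
  have q2p : IsPmf q2 := pull_pmf e2 he2 (swap q1) (swap_pmf q1 q1p) hl fun t => q1ge _
  set π : 𝒳 × 𝒴 → ℝ := swap q2 with hπ
  have πp : IsPmf π := swap_pmf q2 q2p
  have T1n : ∀ x xh : 𝒳, 0 ≤ Tch e1 x xh := Tch_nonneg he1 (by linarith)
  have T2n : ∀ x xh : 𝒴, 0 ≤ Tch e2 x xh := Tch_nonneg he2 (by linarith)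
  set p : (𝒳 × 𝒴) × (𝒳 × 𝒴) → ℝ := fun t =>
    π t.2 * (Tch e1 t.1.1 t.2.1 * Tch e2 t.1.2 t.2.2) with hp
  have hqm : ∀ s, ∑ u, p (s, u) = q s := by
    rintro ⟨x, y⟩
    rw [Fintype.sum_prod_type, ← pull_T e1 q hk x y]
    refine Finset.sum_congr rfl fun xh _ => ?_
    have := pull_T e2 (swap q1) hl y xh
    rw [show pull e1 q (xh, y) = swap q1 (y, xh) from rfl, ← this, Finset.sum_mul]
    refine Finset.sum_congr rfl fun yh _ => ?_
    simp only [hp, hπ, swap, hq2]; ring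
  have pn : ∀ t, 0 ≤ p t := fun t => mul_nonneg (πp.1 _) (mul_nonneg (T1n _ _) (T2n _ _))
  have ps : ∑ t, p t = 1 := by
    rw [Fintype.sum_prod_type]; simp only [hqm]; exact hq.2
  have hY : ∀ y, 0 < ∑ x, q (x, y) := margY_pos q hsupp
  have hX : ∀ x, 0 < ∑ y, q (x, y) := margY_pos (swap q) (fun y x => hsupp x y)
  -- means
  have mq : ∀ ψ : 𝒳 × 𝒴 → ℝ, ∑ t, p t * ψ t.1 = ∑ s, q s * ψ s := by
    intro ψ
    rw [Fintype.sum_prod_type]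
    exact Finset.sum_congr rfl fun s _ => by
      dsimp only; rw [← Finset.sum_mul, hqm]
  have s1 : ∀ y u, ∑ x, p ((x, y), u) = π u * Tch e2 y u.2 := by
    intro y u
    simp only [hp]
    rw [← Finset.mul_sum, ← Finset.sum_mul, Tch_sum, one_mul]
  have s2 : ∀ x u, ∑ y, p ((x, y), u) = π u * Tch e1 x u.1 := by
    intro x u
    simp only [hp]
    rw [← Finset.mul_sum, ← Finset.mul_sum, Tch_sum, mul_one]
  have mD1 : D1 = ∑ t, p t * dHam t.1.1 t.2.1 := by
    rw [Fintype.sum_prod_type_right]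
    have : ∀ u, ∑ s : 𝒳 × 𝒴, p (s, u) * dHam s.1 u.1 = π u * D1 := by
      intro u
      rw [Fintype.sum_prod_type]
      simp only [← Finset.sum_mul, s2]
      rw [hD1, ← Tch_dist e1 u.1, Finset.mul_sum]
      exact Finset.sum_congr rfl fun x _ => by ring
    simp only [this, ← Finset.sum_mul, πp.2, one_mul]
  have mD2 : D2 = ∑ t, p t * dHam t.1.2 t.2.2 := by
    rw [Fintype.sum_prod_type_right]
    have : ∀ u, ∑ s : 𝒳 × 𝒴, p (s, u) * dHam s.2 u.2 = π u * D2 := by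
      intro u
      rw [Fintype.sum_prod_type_right]
      simp only [← Finset.sum_mul, s1]
      rw [hD2, ← Tch_dist e2 u.2, Finset.mul_sum]
      exact Finset.sum_congr rfl fun x _ => by ring
    simp only [this, ← Finset.sum_mul, πp.2, one_mul]
  have mT1 : ∑ t, p t * Real.logb 2 (Tch e1 t.1.1 t.2.1) = tval 𝒳 e1 D1 := by
    simp only [log_Tch]; rw [sum_tval e1 p _ ps, mD1]
  have mT2 : ∑ t, p t * Real.logb 2 (Tch e2 t.1.2 t.2.2) = tval 𝒴 e2 D2 := by
    simp only [log_Tch]; rw [sum_tval e2 p _ ps, mD2]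
  have mH : ∑ t, p t * Real.logb 2 (q t.1) = - H2 q := by
    rw [mq (fun s => Real.logb 2 (q s)), H2, neg_neg]
  have mHY : ∑ t, p t * Real.logb 2 (∑ x, q (x, t.1.2)) = - H2 (fun y => ∑ x, q (x, y)) := by
    rw [mq (fun s => Real.logb 2 (∑ x, q (x, s.2))), sum_margY_log]
  have mHX : ∑ t, p t * Real.logb 2 (∑ y, q (t.1.1, y)) = - H2 (fun x => ∑ y, q (x, y)) := by
    rw [mq (fun s => Real.logb 2 (∑ y, q (s.1, y)))]
    have := sum_margY_log (swap q)
    rw [Fintype.sum_prod_type_right] at this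
    rw [Fintype.sum_prod_type]
    exact this
  have ppos : ∀ t, p t ≠ 0 → Tch e1 t.1.1 t.2.1 ≠ 0 ∧ Tch e2 t.1.2 t.2.2 ≠ 0 := by
    intro t h
    have := right_ne_zero_of_mul h
    exact ⟨left_ne_zero_of_mul this, right_ne_zero_of_mul this⟩
  set ρ : (𝒳 × 𝒴) × (𝒳 × 𝒴) → ℝ := fun t =>
    Tch e1 t.1.1 t.2.1 * Tch e2 t.1.2 t.2.2 / q t.1 with hρ
  set ρ1 : 𝒴 × (𝒳 × 𝒴) → ℝ := fun t => Tch e2 t.1 t.2.2 / ∑ x, q (x, t.1) with hρ1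
  set ρ2 : 𝒳 × (𝒳 × 𝒴) → ℝ := fun t => Tch e1 t.1 t.2.1 / ∑ y, q (t.1, y) with hρ2
  have mI : ∑ t, p t * Real.logb 2 (ρ t) = H2 q + tval 𝒳 e1 D1 + tval 𝒴 e2 D2 := by
    have : ∑ t, p t * Real.logb 2 (ρ t) = ∑ t, p t * Real.logb 2 (Tch e1 t.1.1 t.2.1) +
        ∑ t, p t * Real.logb 2 (Tch e2 t.1.2 t.2.2) - ∑ t, p t * Real.logb 2 (q t.1) := by
      rw [← Finset.sum_add_distrib, ← Finset.sum_sub_distrib]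
      refine Finset.sum_congr rfl fun t _ => ?_
      by_cases h : p t = 0
      · rw [h]; simp
      · obtain ⟨a, b⟩ := ppos t h
        rw [hρ]
        dsimp only
        rw [Real.logb_div (mul_ne_zero a b) (hsupp t.1.1 t.1.2).ne', Real.logb_mul a b]
        ring
    rw [this, mT1, mT2, mH]; ring
  have mI1 : ∑ t, p t * Real.logb 2 (ρ1 (t.1.2, t.2)) =
      H2 (fun y => ∑ x, q (x, y)) + tval 𝒴 e2 D2 := by
    have : ∑ t, p t * Real.logb 2 (ρ1 (t.1.2, t.2)) =
        ∑ t, p t * Real.logb 2 (Tch e2 t.1.2 t.2.2) -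
        ∑ t, p t * Real.logb 2 (∑ x, q (x, t.1.2)) := by
      rw [← Finset.sum_sub_distrib]
      refine Finset.sum_congr rfl fun t _ => ?_
      by_cases h : p t = 0
      · rw [h]; simp
      · obtain ⟨a, b⟩ := ppos t h
        rw [hρ1]
        dsimp only
        rw [Real.logb_div b (hY _).ne']
        ring
    rw [this, mT2, mHY]; ring
  have mI2 : ∑ t, p t * Real.logb 2 (ρ2 (t.1.1, t.2)) =
      H2 (fun x => ∑ y, q (x, y)) + tval 𝒳 e1 D1 := by
    have : ∑ t, p t * Real.logb 2 (ρ2 (t.1.1, t.2)) =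
        ∑ t, p t * Real.logb 2 (Tch e1 t.1.1 t.2.1) -
        ∑ t, p t * Real.logb 2 (∑ y, q (t.1.1, y)) := by
      rw [← Finset.sum_sub_distrib]
      refine Finset.sum_congr rfl fun t _ => ?_
      by_cases h : p t = 0
      · rw [h]; simp
      · obtain ⟨a, b⟩ := ppos t h
        rw [hρ2]
        dsimp only
        rw [Real.logb_div a (hX _).ne']
        ring
    rw [this, mT1, mHX]; ring
  have hρn : ∀ t, 0 ≤ ρ t := fun t => div_nonneg (mul_nonneg (T1n _ _) (T2n _ _)) (hq.1 _)
  have h0 : ∀ s u, p (s, u) = ρ (s, u) * q s * π u := by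
    intro s u
    have := (hsupp s.1 s.2).ne'
    simp only [hp, hρ]
    rw [div_mul_cancel₀ _ this]; ring
  have c1 : H2 q + tval 𝒳 e1 D1 + tval 𝒴 e2 D2 - (H2 (fun y => ∑ x, q (x, y)) + tval 𝒴 e2 D2) ≤ F := by
    unfold condH at hF1; linarith
  have c2 : H2 q + tval 𝒳 e1 D1 + tval 𝒴 e2 D2 - (H2 (fun x => ∑ y, q (x, y)) + tval 𝒳 e1 D1) ≤ F := by
    unfold condH at hF2
    rw [swap_H2] at hF2
    simp only [swap] at hF2
    linarith
  obtain ⟨n, M, f, g1, g2, hn, hr, hb⟩ := iid_code p ρ q π ρ1 ρ2 (fun t => dHam t.1 t.2.1) (fun t => dHam t.1 t.2.2)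
    ⟨pn, ps⟩ hq πp hqm hρn
    (fun t => div_nonneg (T2n _ _) (hY _).le) (fun t => div_nonneg (T1n _ _) (hX _).le) h0
    (fun y u => by
      rw [s1]; simp only [hρ1]; rw [div_mul_cancel₀ _ (hY y).ne']; ring)
    (fun x u => by
      rw [s2]; simp only [hρ2]; rw [div_mul_cancel₀ _ (hX x).ne']; ring)
    _ _ _ D1 D2 mI.symm mI1.symm mI2.symm mD1 mD2 F ε
    (by rw [← mI]; exact info_nonneg p ρ q π ⟨pn, ps⟩ hq πp hρn h0) hF0 c1 c2 hε
  refine ⟨n, M, f, g1, g2, hn, hr, le_trans (le_of_eq ?_) hb⟩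
  refine Finset.sum_congr rfl fun s _ => ?_
  congr!

end TWR

namespace TWR

variable {𝒳 𝒴 : Type} [Fintype 𝒳] [Fintype 𝒴]

lemma avg_bound {S : Type} [Fintype S] (w Z : S → ℝ) (hw : ∀ s, 0 ≤ w s) (hw1 : ∑ s, w s = 1)
    (good : S → Prop) (D ε : ℝ) (hD : 0 ≤ D) (hZ : ∀ s, Z s ≤ 1) (hg : ∀ s, good s → Z s ≤ D)
    (hb : ∑ s, (if good s then 0 else w s) ≤ ε) : ∑ s, w s * Z s ≤ D + ε := by
  have : ∑ s, w s * Z s ≤ ∑ s, (w s * D + if good s then 0 else w s) := by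
    refine Finset.sum_le_sum fun s _ => ?_
    split_ifs with h
    · rw [add_zero]; exact mul_le_mul_of_nonneg_left (hg s h) (hw s)
    · nlinarith [hw s, hZ s, mul_nonneg (hw s) hD, mul_le_mul_of_nonneg_left (hZ s) (hw s)]
  rw [Finset.sum_add_distrib, ← Finset.sum_mul, hw1, one_mul] at this
  linarith

lemma dHam_le_one {α : Type} (a b : α) : dHam a b ≤ 1 := by
  unfold dHam; split_ifs <;> norm_num

lemma avg_dHam_le_one {α : Type} {n : ℕ} (hn : 0 < n) (a b : Fin n → α) :
    (n:ℝ)⁻¹ * ∑ i, dHam (a i) (b i) ≤ 1 := by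
  have hn' : (0:ℝ) < n := by exact_mod_cast hn
  rw [inv_mul_le_iff₀ hn']
  refine le_trans (Finset.sum_le_sum fun i _ => dHam_le_one (a i) (b i)) ?_
  simp

lemma cr_ach (q : 𝒳 × 𝒴 → ℝ) (hq : IsPmf q) (hsupp : ∀ x y, 0 < q (x, y))
    [Nonempty 𝒳] [Nonempty 𝒴]
    (e1 e2 : ℝ) (he1 : 0 ≤ e1) (he2 : 0 ≤ e2) (hk : (Fintype.card 𝒳 : ℝ) * e1 < 1)
    (hl : (Fintype.card 𝒴 : ℝ) * e2 < 1) (hm : ∀ t, e1 + e2 ≤ q t)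
    (d1 d2 F : ℝ) (hd1 : ((Fintype.card 𝒳 : ℝ) - 1) * e1 ≤ d1)
    (hd2 : ((Fintype.card 𝒴 : ℝ) - 1) * e2 ≤ d2) (hF0 : 0 ≤ F)
    (hF1 : condH q + tval 𝒳 e1 (((Fintype.card 𝒳 : ℝ) - 1) * e1) ≤ F)
    (hF2 : condH (swap q) + tval 𝒴 e2 (((Fintype.card 𝒴 : ℝ) - 1) * e2) ≤ F) :
    CRAchievable q (dHam (α := 𝒳)) (dHam (α := 𝒴)) d1 d2 F := by
  intro ε hε
  have hk1 : (1:ℝ) ≤ Fintype.card 𝒳 := by exact_mod_cast Fintype.card_pos (α := 𝒳)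
  have hl1 : (1:ℝ) ≤ Fintype.card 𝒴 := by exact_mod_cast Fintype.card_pos (α := 𝒴)
  obtain ⟨n, m, f, g1, g2, hn, hr, hb⟩ := hamming_code q hq hsupp e1 e2 he1 he2 hk hl hm _ _ F
    rfl rfl hF0 hF1 hF2 (ε / 2) (by positivity)
  have hn' : (0:ℝ) < n := by exact_mod_cast hn
  have hD1 : 0 ≤ ((Fintype.card 𝒳 : ℝ) - 1) * e1 := mul_nonneg (by linarith) he1
  have hD2 : 0 ≤ ((Fintype.card 𝒴 : ℝ) - 1) * e2 := mul_nonneg (by linarith) he2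
  refine ⟨n, m, f, fun t i => (g1 t i).1, fun t i => (g2 t i).2, fun t i => (g1 t i).2,
    fun t i => (g2 t i).1, hn, by linarith, ?_, ?_, ?_, ?_⟩
  · refine le_trans (avg_bound (iid q n) _ (iid_nonneg q hq n) (iid_sum q hq n)
      (fun s => (∑ i, dHam (s.1 i) (g1 (f s, s.2) i).1 ≤
          n * (((Fintype.card 𝒳 : ℝ) - 1) * e1 + ε / 2) ∧
        ∑ i, dHam (s.2 i) (g1 (f s, s.2) i).2 ≤
          n * (((Fintype.card 𝒴 : ℝ) - 1) * e2 + ε / 2)) ∧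
          g1 (f s, s.2) = g2 (f s, s.1))
      (((Fintype.card 𝒳 : ℝ) - 1) * e1 + ε / 2) (ε / 2) (by linarith)
      (fun s => avg_dHam_le_one hn _ _) ?_ (le_trans (le_of_eq ?_) hb)) (by linarith)
    · intro s h
      rw [inv_mul_le_iff₀ hn']
      exact h.1.1
    · refine Finset.sum_congr rfl fun s _ => ?_
      congr!
  · refine le_trans (avg_bound (iid q n) _ (iid_nonneg q hq n) (iid_sum q hq n)
      (fun s => (∑ i, dHam (s.1 i) (g1 (f s, s.2) i).1 ≤
          n * (((Fintype.card 𝒳 : ℝ) - 1) * e1 + ε / 2) ∧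
        ∑ i, dHam (s.2 i) (g1 (f s, s.2) i).2 ≤
          n * (((Fintype.card 𝒴 : ℝ) - 1) * e2 + ε / 2)) ∧
          g1 (f s, s.2) = g2 (f s, s.1))
      (((Fintype.card 𝒴 : ℝ) - 1) * e2 + ε / 2) (ε / 2) (by linarith)
      (fun s => avg_dHam_le_one hn _ _) ?_ (le_trans (le_of_eq ?_) hb)) (by linarith)
    · intro s h
      rw [inv_mul_le_iff₀ hn']
      dsimp only
      rw [← h.2]
      exact h.1.2
    · refine Finset.sum_congr rfl fun s _ => ?_
      congr!
  · refine le_trans (le_trans (Finset.sum_le_sum fun s _ => ?_) hb) (by linarith)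
    have := iid_nonneg q hq n s
    by_cases h : g1 (f s, s.2) = g2 (f s, s.1)
    · refine le_trans (le_of_eq (if_pos ?_)) ?_
      · dsimp only; rw [h]
      · split_ifs
        exacts [le_rfl, this]
    · refine le_trans ?_ (le_of_eq (if_neg (fun h' => h h'.2)).symm)
      split_ifs
      exacts [this, le_rfl]
  · refine le_trans (le_trans (Finset.sum_le_sum fun s _ => ?_) hb) (by linarith)
    have := iid_nonneg q hq n s
    by_cases h : g1 (f s, s.2) = g2 (f s, s.1)
    · refine le_trans (le_of_eq (if_pos ?_)) ?_
      · dsimp only; rw [h]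
      · split_ifs
        exacts [le_rfl, this]
    · refine le_trans ?_ (le_of_eq (if_neg (fun h' => h h'.2)).symm)
      split_ifs
      exacts [this, le_rfl]

lemma CR_to_RD (q : 𝒳 × 𝒴 → ℝ) (δ1 : 𝒳 → 𝒳 → ℝ) (δ2 : 𝒴 → 𝒴 → ℝ) (d1 d2 r : ℝ)
    (h : CRAchievable q δ1 δ2 d1 d2 r) : RDAchievable q δ1 δ2 d1 d2 r := by
  intro ε hε
  obtain ⟨n, m, f, g1, g2, _, _, hn, hr, h1, h2, _⟩ := h ε hε
  exact ⟨n, m, f, g1, g2, hn, hr, h1, h2⟩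

lemma Delta2_swap (q : 𝒳 × 𝒴 → ℝ) (δ2 : 𝒴 → 𝒴 → ℝ) {n m : ℕ}
    (f : (Fin n → 𝒳) × (Fin n → 𝒴) → Fin m) (g2 : Fin m × (Fin n → 𝒳) → Fin n → 𝒴) :
    Delta1 (swap q) δ2 (fun t => f (t.2, t.1)) g2 = Delta2 q δ2 f g2 := by
  unfold Delta1 Delta2
  rw [Fintype.sum_prod_type, Fintype.sum_prod_type_right]
  rfl

lemma m_pos [Nonempty 𝒳] [Nonempty 𝒴] {n m : ℕ}
    (f : (Fin n → 𝒳) × (Fin n → 𝒴) → Fin m) : 0 < m :=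
  Fin.pos (f (fun _ => Classical.arbitrary _, fun _ => Classical.arbitrary _))

/-- The crossover parameter. -/
lemma e_facts [Nonempty 𝒳] (d μ e : ℝ) (hd : 0 ≤ d) (hdμ : d ≤ μ / 4)
    (hkμ : (Fintype.card 𝒳 : ℝ) * μ ≤ 1) (he : e = d / ((Fintype.card 𝒳 : ℝ) - 1)) :
    0 ≤ e ∧ e ≤ μ / 4 ∧ (Fintype.card 𝒳 : ℝ) * e < 1 ∧ ((Fintype.card 𝒳 : ℝ) - 1) * e ≤ d := by
  have hk1 : (1:ℝ) ≤ Fintype.card 𝒳 := by exact_mod_cast Fintype.card_pos (α := 𝒳)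
  have a : 0 ≤ e := by rw [he]; exact div_nonneg hd (by linarith)
  have key : e ≤ d ∧ ((Fintype.card 𝒳 : ℝ) - 1) * e ≤ d := by
    by_cases h : Fintype.card 𝒳 = 1
    · rw [h] at he ⊢
      simp at he
      subst he; simpa using hd
    · have h2 : (2:ℝ) ≤ Fintype.card 𝒳 := by
        have : 2 ≤ Fintype.card 𝒳 := by
          have := Fintype.card_pos (α := 𝒳); omega
        exact_mod_cast this
      refine ⟨?_, ?_⟩
      · rw [he]; exact div_le_self hd (by linarith)
      · rw [he, mul_div_cancel₀ _ (by linarith)]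
  refine ⟨a, by linarith [key.1], ?_, key.2⟩
  nlinarith [key.1]

end TWR

open TWR in
/-- Theorem 2: for a full-support source and Hamming
distortions there is a strictly positive region of small distortions where
`R_CR(d1,d2) = R(d1,d2) = max{R_{X|Y}(d1), R_{Y|X}(d2)}`. -/
theorem small_distortion_region
    {𝒳 𝒴 : Type} [Fintype 𝒳] [Fintype 𝒴]
    (q : 𝒳 × 𝒴 → ℝ) (hq : IsPmf q) (hsupp : ∀ x y, 0 < q (x, y)) :
    ∃ d1s > (0 : ℝ), ∃ d2s > (0 : ℝ), ∀ d1 d2 : ℝ,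
      0 ≤ d1 → d1 ≤ d1s → 0 ≤ d2 → d2 ≤ d2s →
      CRRD q (dHam (α := 𝒳)) (dHam (α := 𝒴)) d1 d2 =
        RD q (dHam (α := 𝒳)) (dHam (α := 𝒴)) d1 d2 ∧
      RD q (dHam (α := 𝒳)) (dHam (α := 𝒴)) d1 d2 =
        max (condRD q (dHam (α := 𝒳)) d1) (condRD (swap q) (dHam (α := 𝒴)) d2) := by
  have hne : Nonempty (𝒳 × 𝒴) := by
    by_contra h
    rw [not_nonempty_iff] at h
    have := hq.2
    simp at this
  have : Nonempty 𝒳 := ⟨hne.some.1⟩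
  have : Nonempty 𝒴 := ⟨hne.some.2⟩
  obtain ⟨t0, ht0⟩ := Finite.exists_min q
  have hμ : 0 < q t0 := hsupp t0.1 t0.2
  have hkμ : (Fintype.card 𝒳 : ℝ) * q t0 ≤ 1 := by
    refine le_trans ?_ (marg_le_one q hq (Classical.arbitrary 𝒴))
    have := Finset.card_nsmul_le_sum Finset.univ (fun x => q (x, Classical.arbitrary 𝒴)) (q t0)
      (fun x _ => ht0 _)
    simpa using this
  have hlμ : (Fintype.card 𝒴 : ℝ) * q t0 ≤ 1 := by
    refine le_trans ?_ (marg_le_one (swap q) (swap_pmf q hq) (Classical.arbitrary 𝒳))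
    have := Finset.card_nsmul_le_sum Finset.univ (fun y => swap q (y, Classical.arbitrary 𝒳)) (q t0)
      (fun x _ => ht0 _)
    simpa using this
  refine ⟨q t0 / 4, by positivity, q t0 / 4, by positivity, ?_⟩
  intro d1 d2 hd1 hd1s hd2 hd2s
  obtain ⟨e1, he1⟩ : ∃ e1, e1 = d1 / ((Fintype.card 𝒳 : ℝ) - 1) := ⟨_, rfl⟩
  obtain ⟨e2, he2⟩ : ∃ e2, e2 = d2 / ((Fintype.card 𝒴 : ℝ) - 1) := ⟨_, rfl⟩
  obtain ⟨a1, b1, c1, D1⟩ := e_facts d1 (q t0) e1 hd1 hd1s hkμ he1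
  obtain ⟨a2, b2, c2, D2⟩ := e_facts d2 (q t0) e2 hd2 hd2s hlμ he2
  have hsw := swap_pmf q hq
  have hss : ∀ y x, 0 < swap q (y, x) := fun y x => hsupp x y
  have hq1 : ∀ t, e1 < q t := fun t => by linarith [ht0 t]
  have hq2 : ∀ t, e2 < swap q t := fun t => by
    have := ht0 (t.2, t.1)
    change e2 < q (t.2, t.1)
    linarith
  rw [condRD_eq q hq hsupp d1 e1 hd1 he1 a1 c1 hq1,
    condRD_eq (swap q) hsw hss d2 e2 hd2 he2 a2 c2 hq2]
  obtain ⟨_, _, _, _, F0⟩ := condMI_pull q hq hsupp e1 a1 c1 hq1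
  set F1 := condH q + tval 𝒳 e1 (((Fintype.card 𝒳 : ℝ) - 1) * e1) with hF1
  set F2 := condH (swap q) + tval 𝒴 e2 (((Fintype.card 𝒴 : ℝ) - 1) * e2) with hF2
  have hF0 : 0 ≤ max F1 F2 := le_trans F0 (le_max_left _ _)
  have hach : CRAchievable q (dHam (α := 𝒳)) (dHam (α := 𝒴)) d1 d2 (max F1 F2) :=
    cr_ach q hq hsupp e1 e2 a1 a2 c1 c2 (fun t => by linarith [ht0 t]) d1 d2 _ D1 D2 hF0
      (le_max_left _ _) (le_max_right _ _)
  have up : CRRD q (dHam (α := 𝒳)) (dHam (α := 𝒴)) d1 d2 ≤ max F1 F2 :=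
    csInf_le ⟨0, fun r hr => hr.1⟩ ⟨hF0, hach⟩
  have mid : RD q (dHam (α := 𝒳)) (dHam (α := 𝒴)) d1 d2 ≤
      CRRD q (dHam (α := 𝒳)) (dHam (α := 𝒴)) d1 d2 :=
    csInf_le_csInf ⟨0, fun r hr => hr.1⟩ ⟨_, hF0, hach⟩
      (fun r hr => ⟨hr.1, CR_to_RD _ _ _ _ _ _ hr.2⟩)
  have low : max F1 F2 ≤ RD q (dHam (α := 𝒳)) (dHam (α := 𝒴)) d1 d2 := by
    refine le_csInf ⟨_, hF0, CR_to_RD _ _ _ _ _ _ hach⟩ ?_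
    rintro r ⟨_, hr⟩
    refine max_le ?_ ?_
    · refine conv_ach q hq hsupp d1 e1 r he1 a1 c1 fun ε hε => ?_
      obtain ⟨n, m, f, g1, g2, hn, hrate, h1, h2⟩ := hr ε hε
      exact ⟨n, m, f, g1, hn, m_pos f, hrate, h1⟩
    · refine conv_ach (swap q) hsw hss d2 e2 r he2 a2 c2 fun ε hε => ?_
      obtain ⟨n, m, f, g1, g2, hn, hrate, h1, h2⟩ := hr ε hε
      refine ⟨n, m, fun t => f (t.2, t.1), g2, hn, m_pos f, hrate, ?_⟩
      rw [Delta2_swap]; exact h2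
  exact ⟨le_antisymm (up.trans low) mid, le_antisymm (mid.trans up) low⟩
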